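/- arXiv:1505.06515 — 2 statements merged into one kernel-verified Lean document; each statement's English description precedes it below -/
import Mathlib

section
/- Let a < 0 be real such that a·(2k+1)·(2k+3) ≠ −1 for every integer k ≥ 0, a is not a negative even integer (so ζ(a) ≠ 0), and a ≠ −2p/(4q² − 1) for all positive integers p, q. Then, writing K = (2k+1)·(2k+3), ∑_{k=0}^{∞} (−1)^k · K · ζ'(−a·K)/ζ(−a·K) − (π/(2a)) · ∑_{n=1}^{∞} n / ( √(−a² − 2an) · sinh( π·√(−a² − 2an)/(2a) ) ) = −ζ'(a)/(2·ζ(a)) + π / ( 4a · √(a − a²) · sinh( π·√(a − a²)/(2a) ) ) − (π/(4a)) · ∑_{τ} τ / ( √(a·τ − a²) · sinh( π·√(a·τ − a²)/(2a) ) ), where the last sum runs over all nontrivial zeros τ of ζ. -/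
/-!
The identity says that the residues of

  `w ↦ w ζ'(w) / (ζ(w) S(w))`,  `S(w) = √(a w - a²) sinh (π √(a w - a²) / (2 a))`,

add up to zero. The function `S` is entire, since the product does not depend on the choice of the
square root: with `w = a - 4 a z²` one has `S(w) = -2 a z sin (π z)`, so the zeros of `S` are the
points `a - 4 a m²`, `m = 0, 1, 2, …`, and they are simple. For `m = k + 1` this point is
`-a (2 k + 1) (2 k + 3)`. The poles and their residues are

* the points `a - 4 a m²`: `m = 0` gives the term with `ζ'(a) / ζ(a)`, and `m = k + 1` gives the
  series over `k`;
* the zeros `ρ` of zeta, with residue `ρ / S(ρ)`: the trivial ones give the series over `n`, the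
  nontrivial ones the series over `τ`;
* the pole of zeta at `1`, with residue `-1 / S(1)`.

It remains to find circles centred at `a`, of radii tending to infinity, over which the integral
tends to zero (`exists_circle`), and to show that the sums converge absolutely (`summable_zeros`,
`summable_poles`). The entire function `(s - 1) ζ(s)` has order at most two (`norm_zeta₁_le`), by an
elementary series in the right half-plane and the functional equation. Hence zeta has `O(r²)` zeros
in a disc of radius `r` (`card_zeros_le`), and `ζ'/ζ` is polynomially bounded on suitable circles, by
the Borel–Carathéodory inequality (`exists_good_radius`). Away from the positive real direction `S`
grows exponentially in `√|w|` and beats this bound. Near the positive real direction `ζ'/ζ` is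
exponentially small, and `S` is bounded below as soon as the circle passes between its zeros. Two
poles never coincide, because zeta does not vanish on `(0, ∞)` (`zeta_ne_zero_of_pos`), and the
hypotheses on `a` keep `a` off the trivial zeros and `1` off the zeros of `S`.
-/

open Complex
open scoped Real

section

open Filter Topology Set

/-! ### Growth of zeta on the right half-plane, and its real zeros -/

/-- The difference `(s - 1) (n + 1) ^ (-s) - ∫ x in n+1..n+2, (s - 1) x ^ (-s)`, with the integral
evaluated. Its sum over `n` is `(s - 1) ζ(s) - 1`, and it converges for `0 < re s`. -/
noncomputable def zetaTerm (n : ℕ) (s : ℂ) : ℂ :=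
  (s - 1) * ((n : ℂ) + 1) ^ (-s) - (((n : ℂ) + 1) ^ (1 - s) - ((n : ℂ) + 1 + 1) ^ (1 - s))

lemma cpow_hasDerivAt_shift (x : ℝ) (hx : 0 < x) (v : ℝ) (c : ℂ) (t : ℝ) (ht : 0 ≤ v * t) :
    HasDerivAt (fun t : ℝ ↦ ((x : ℂ) + v * t) ^ c) (c * ((x : ℂ) + v * t) ^ (c - 1) * v) t := by
  have h1 : HasDerivAt (fun z : ℂ ↦ (x : ℂ) + v * z) (v : ℂ) (t : ℂ) := by
    simpa using ((hasDerivAt_id (t : ℂ)).const_mul (v : ℂ)).const_add (x : ℂ)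
  have h2 := h1.cpow_const (c := c) (by
    left
    have : ((x : ℂ) + v * t).re = x + v * t := by simp
    rw [this]; linarith)
  exact h2.comp_ofReal

lemma norm_cpow_shift (x : ℝ) (c : ℂ) (y : ℝ) (h : 0 < x + y) :
    ‖((x : ℂ) + y) ^ c‖ = (x + y) ^ c.re := by
  rw [← ofReal_add, norm_cpow_eq_rpow_re_of_pos h]

lemma norm_cpow_sub_le (x : ℝ) (hx : 0 < x) (s : ℂ) (hs : 0 < s.re) (t : ℝ) (ht0 : 0 ≤ t)
    (ht1 : t ≤ 1) : ‖(x : ℂ) ^ (-s) - ((x : ℂ) + t) ^ (-s)‖ ≤ ‖s‖ * x ^ (-s.re - 1) := by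
  have := norm_image_sub_le_of_norm_deriv_le_segment_01'
    (f := fun u : ℝ ↦ ((x : ℂ) + t * u) ^ (-s))
    (f' := fun u : ℝ ↦ (-s) * ((x : ℂ) + t * u) ^ (-s - 1) * t) (C := ‖s‖ * x ^ (-s.re - 1))
    (fun u hu ↦ (cpow_hasDerivAt_shift x hx t _ u (mul_nonneg ht0 hu.1)).hasDerivWithinAt)
    (fun u hu ↦ by
      have h0 : 0 ≤ t * u := mul_nonneg ht0 hu.1
      rw [norm_mul, norm_mul, norm_neg, ← ofReal_mul, norm_cpow_shift _ _ _ (by linarith),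
        norm_real, Real.norm_of_nonneg ht0]
      have : (x + t * u) ^ (-s - 1).re ≤ x ^ (-s.re - 1) := by
        simp only [sub_re, neg_re, one_re]
        exact Real.rpow_le_rpow_of_nonpos hx (by linarith) (by linarith)
      calc ‖s‖ * (x + t * u) ^ (-s - 1).re * t ≤ ‖s‖ * (x + t * u) ^ (-s - 1).re * 1 := by
            gcongr
        _ ≤ _ := by rw [mul_one]; gcongr)
  rw [norm_sub_rev]
  simpa using this

lemma norm_zetaTerm_le (n : ℕ) (s : ℂ) (hs : 0 < s.re) :
    ‖zetaTerm n s‖ ≤ ‖s - 1‖ * ‖s‖ * ((n : ℝ) + 1) ^ (-s.re - 1) := by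
  set x : ℝ := (n : ℝ) + 1 with hxdef
  have hx : 0 < x := by positivity
  have := norm_image_sub_le_of_norm_deriv_le_segment_01'
    (f := fun t : ℝ ↦ (t : ℂ) * ((s - 1) * (x : ℂ) ^ (-s)) + ((x : ℂ) + (1 : ℝ) * t) ^ (1 - s))
    (f' := fun t : ℝ ↦ 1 * ((s - 1) * (x : ℂ) ^ (-s)) +
      (1 - s) * ((x : ℂ) + (1 : ℝ) * t) ^ (1 - s - 1) * (1 : ℝ))
    (C := ‖s - 1‖ * ‖s‖ * x ^ (-s.re - 1))
    (fun t ht ↦ by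
      have h1 : HasDerivAt (fun t : ℝ ↦ (t : ℂ) * ((s - 1) * (x : ℂ) ^ (-s)))
          (1 * ((s - 1) * (x : ℂ) ^ (-s))) t :=
        ((hasDerivAt_id (t : ℂ)).mul_const _).comp_ofReal
      exact (h1.add (cpow_hasDerivAt_shift x hx 1 _ t (by simpa using ht.1))).hasDerivWithinAt)
    (fun t ht ↦ by
      have e : 1 * ((s - 1) * (x : ℂ) ^ (-s)) +
          (1 - s) * ((x : ℂ) + (1 : ℝ) * t) ^ (1 - s - 1) * (1 : ℝ)
          = (s - 1) * ((x : ℂ) ^ (-s) - ((x : ℂ) + t) ^ (-s)) := by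
        rw [show 1 - s - 1 = -s by ring]; push_cast; rw [one_mul (t : ℂ)]; ring
      rw [e, norm_mul, mul_assoc]
      gcongr
      exact norm_cpow_sub_le x hx s hs t ht.1 ht.2.le)
  refine le_trans (le_of_eq ?_) this
  congr 1
  simp only [zetaTerm, hxdef]
  push_cast
  simp
  ring

lemma differentiable_zetaTerm (n : ℕ) : Differentiable ℂ (zetaTerm n) := by
  have h1 : (n : ℂ) + 1 ≠ 0 := by exact_mod_cast Nat.succ_ne_zero n
  have h2 : (n : ℂ) + 1 + 1 ≠ 0 := by exact_mod_cast Nat.succ_ne_zero (n + 1)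
  intro s
  unfold zetaTerm
  refine DifferentiableAt.sub (DifferentiableAt.mul (by fun_prop) ?_)
    (DifferentiableAt.sub ?_ ?_)
  · exact DifferentiableAt.const_cpow (by fun_prop) (Or.inl h1)
  · exact DifferentiableAt.const_cpow (by fun_prop) (Or.inl h1)
  · exact DifferentiableAt.const_cpow (by fun_prop) (Or.inl h2)

lemma summable_rpow_shift {p : ℝ} (hp : 1 < p) :
    Summable (fun n : ℕ ↦ ((n : ℝ) + 1) ^ (-p)) := by
  have := (summable_nat_add_iff 1).mpr (Real.summable_nat_rpow.mpr (by linarith : -p < -1))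
  simpa using this

lemma summable_zetaTerm {s : ℂ} (hs : 0 < s.re) : Summable (fun n ↦ zetaTerm n s) := by
  refine Summable.of_norm_bounded ?_ (fun n ↦ norm_zetaTerm_le n s hs)
  refine Summable.mul_left _ ?_
  refine (summable_rpow_shift (p := s.re + 1) (by linarith)).congr (fun n ↦ ?_)
  rw [neg_add']

lemma sum_zetaTerm (N : ℕ) (s : ℂ) : 1 + ∑ n ∈ Finset.range N, zetaTerm n s =
    (s - 1) * ∑ n ∈ Finset.range N, ((n : ℂ) + 1) ^ (-s) + ((N : ℂ) + 1) ^ (1 - s) := by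
  induction N with
  | zero => simp
  | succ N ih =>
    rw [Finset.sum_range_succ, Finset.sum_range_succ, ← add_assoc, ih, zetaTerm]
    push_cast
    ring

lemma zeta₁_eq_of_one_lt_re {s : ℂ} (hs : 1 < s.re) :
    riemannZeta₁ s = 1 + ∑' n, zetaTerm n s := by
  have h1 : Tendsto (fun N ↦ 1 + ∑ n ∈ Finset.range N, zetaTerm n s) atTop
      (𝓝 (1 + ∑' n, zetaTerm n s)) :=
    ((summable_zetaTerm (by linarith)).hasSum.tendsto_sum_nat).const_add 1
  have hsum : Summable (fun n : ℕ ↦ ((n : ℂ) + 1) ^ (-s)) := by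
    refine Summable.of_norm_bounded (summable_rpow_shift hs) (fun n ↦ le_of_eq ?_)
    have := norm_cpow_shift n (-s) 1 (by positivity)
    simpa using this
  have h2 : Tendsto (fun N : ℕ ↦ (s - 1) * ∑ n ∈ Finset.range N, ((n : ℂ) + 1) ^ (-s)
      + ((N : ℂ) + 1) ^ (1 - s)) atTop (𝓝 ((s - 1) * ∑' n : ℕ, ((n : ℂ) + 1) ^ (-s) + 0)) := by
    refine (hsum.hasSum.tendsto_sum_nat.const_mul _).add ?_
    rw [tendsto_zero_iff_norm_tendsto_zero]
    have h3 : Tendsto (fun N : ℕ ↦ ((N : ℝ) + 1) ^ (-(s.re - 1))) atTop (𝓝 0) :=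
      (tendsto_rpow_neg_atTop (by linarith)).comp
        (tendsto_atTop_add_const_right _ _ tendsto_natCast_atTop_atTop)
    refine h3.congr (fun N ↦ ?_)
    have := norm_cpow_shift N (1 - s) 1 (by positivity)
    simp only [ofReal_natCast, ofReal_one] at this
    rw [this]; simp
  have h3 := tendsto_nhds_unique (h1.congr (fun N ↦ sum_zetaTerm N s)) h2
  have hne : s ≠ 1 := by rintro rfl; simp at hs
  have h4 := riemannZeta_eq_inv_sub_mul hne
  have h5 : s - 1 ≠ 0 := sub_ne_zero.mpr hne
  rw [h3, add_zero]
  have h6 : riemannZeta s = ∑' n : ℕ, ((n : ℂ) + 1) ^ (-s) := by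
    rw [zeta_eq_tsum_one_div_nat_add_one_cpow hs]
    congr 1; ext n; rw [cpow_neg, one_div]
  rw [← h6, h4]
  field_simp

/-- The series `1 + ∑ zetaTerm n s` continues `(s - 1) ζ(s)` to the right half-plane. -/
lemma zeta₁_eq_tsum {s : ℂ} (hs : 0 < s.re) :
    riemannZeta₁ s = 1 + ∑' n, zetaTerm n s := by
  set U : Set ℂ := {s : ℂ | 0 < s.re}
  have hUo : IsOpen U := isOpen_lt continuous_const continuous_re
  have hUc : IsPreconnected U := (convex_halfSpace_re_gt 0).isPreconnected
  have hd : DifferentiableOn ℂ (fun s ↦ 1 + ∑' n, zetaTerm n s) U := by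
    intro z hz
    have hz' : 0 < z.re := hz
    -- a bounded neighbourhood on which the terms are uniformly summable
    set V : Set ℂ := {w : ℂ | z.re / 2 < w.re} ∩ Metric.ball 0 (‖z‖ + 1)
    have hVo : IsOpen V := (isOpen_lt continuous_const continuous_re).inter Metric.isOpen_ball
    have hzV : z ∈ V := ⟨by simp only [Set.mem_ofPred_eq]; linarith, by simp⟩
    have := differentiableOn_tsum_of_summable_norm (F := zetaTerm) (U := V)
      (u := fun n ↦ (‖z‖ + 2) * (‖z‖ + 1) * ((n : ℝ) + 1) ^ (-(z.re / 2 + 1)))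
      ((summable_rpow_shift (by linarith)).mul_left _)
      (fun n ↦ (differentiable_zetaTerm n).differentiableOn) hVo
      (fun n w hw ↦ by
        have hw1 : z.re / 2 < w.re := hw.1
        have hw2 : ‖w‖ < ‖z‖ + 1 := by simpa using hw.2
        refine (norm_zetaTerm_le n w (by linarith)).trans ?_
        have h3 : ‖w - 1‖ ≤ ‖z‖ + 2 := by
          have := norm_sub_le w 1
          simp only [norm_one] at this; linarith
        have h4 : ((n : ℝ) + 1) ^ (-w.re - 1) ≤ ((n : ℝ) + 1) ^ (-(z.re / 2 + 1)) :=
          Real.rpow_le_rpow_of_exponent_le (by linarith [n.cast_nonneg (α := ℝ)]) (by linarith)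
        gcongr)
    exact ((this.differentiableAt (hVo.mem_nhds hzV)).const_add 1).differentiableWithinAt
  have := (differentiable_riemannZeta₁.differentiableOn.analyticOnNhd hUo
    ).eqOn_of_preconnected_of_eventuallyEq (hd.analyticOnNhd hUo) hUc (z₀ := 2)
    (by simp [U]) (by
      have : {s : ℂ | 1 < s.re} ∈ 𝓝 (2 : ℂ) :=
        (isOpen_lt continuous_const continuous_re).mem_nhds (by simp)
      filter_upwards [this] with w hw using zeta₁_eq_of_one_lt_re hw)
  exact this hs

/-- In the half-plane `1 / 2 ≤ re s` the function `(s - 1) ζ(s)` grows at most quadratically. -/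
lemma norm_zeta₁_le_right : ∃ C : ℝ, 0 < C ∧ ∀ s : ℂ, 1 / 2 ≤ s.re →
    ‖riemannZeta₁ s‖ ≤ C * (1 + ‖s‖) ^ 2 := by
  set T : ℝ := ∑' n : ℕ, ((n : ℝ) + 1) ^ (-(3 / 2 : ℝ))
  have hsum := summable_rpow_shift (p := 3 / 2) (by norm_num)
  have hT : 0 ≤ T := tsum_nonneg (fun n ↦ by positivity)
  refine ⟨1 + T, by linarith, fun s hs ↦ ?_⟩
  rw [zeta₁_eq_tsum (by linarith)]
  have h1 : ‖∑' n, zetaTerm n s‖ ≤ ∑' n : ℕ, (1 + ‖s‖) ^ 2 * ((n : ℝ) + 1) ^ (-(3 / 2 : ℝ)) := by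
    refine tsum_of_norm_bounded (hsum.mul_left _).hasSum (fun n ↦ ?_)
    refine (norm_zetaTerm_le n s (by linarith)).trans ?_
    have h3 : ‖s - 1‖ ≤ 1 + ‖s‖ := by
      have := norm_sub_le s 1
      simp only [norm_one] at this; linarith
    have h4 : ((n : ℝ) + 1) ^ (-s.re - 1) ≤ ((n : ℝ) + 1) ^ (-(3 / 2 : ℝ)) :=
      Real.rpow_le_rpow_of_exponent_le (by linarith [n.cast_nonneg (α := ℝ)]) (by linarith)
    have h5 : ‖s‖ ≤ 1 + ‖s‖ := by linarith
    rw [sq]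
    gcongr
  rw [tsum_mul_left] at h1
  have h2 : (1 : ℝ) ≤ (1 + ‖s‖) ^ 2 := one_le_pow₀ (by linarith [norm_nonneg s])
  calc ‖1 + ∑' n, zetaTerm n s‖ ≤ 1 + (1 + ‖s‖) ^ 2 * T := by
        refine (norm_add_le _ _).trans ?_
        rw [norm_one]; linarith
    _ ≤ (1 + T) * (1 + ‖s‖) ^ 2 := by nlinarith

/-- Zeta has no zero in `(0, 1)`: there the telescoped partial sums of `zetaTerm` are bounded below
by `x`, so that `(x - 1) ζ(x) ≥ x > 0`. -/
lemma zeta₁_ne_zero_of_mem_Ioo {x : ℝ} (h0 : 0 < x) (h1 : x < 1) : riemannZeta₁ (x : ℂ) ≠ 0 := by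
  -- Bernoulli's inequality carries the lower bound from `N` to `N + 1`
  have key : ∀ N : ℕ, x + (1 - x) * ((N : ℝ) + 1) ^ (-x) ≤
      (x - 1) * ∑ n ∈ Finset.range N, ((n : ℝ) + 1) ^ (-x) + ((N : ℝ) + 1) ^ (1 - x) := by
    intro N
    induction N with
    | zero => simp
    | succ N ih =>
      rw [Finset.sum_range_succ]
      push_cast
      set y : ℝ := (N : ℝ) + 1
      have hy : 0 < y := by positivity
      have hb := rpow_one_add_le_one_add_mul_self (s := -(1 / (y + 1))) (p := 1 - x)
        (by rw [neg_le_neg_iff, div_le_one (by positivity)]; linarith) (by linarith) (by linarith)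
      have e1 : 1 + -(1 / (y + 1)) = y / (y + 1) := by field_simp; ring
      rw [e1, Real.div_rpow hy.le (by positivity), div_le_iff₀ (by positivity)] at hb
      have e2 : (y + 1) ^ (1 - x) = (y + 1) * (y + 1) ^ (-x) := by
        rw [sub_eq_add_neg, Real.rpow_add (by positivity), Real.rpow_one]
      have e3 : (1 + (1 - x) * -(1 / (y + 1))) * (y + 1) ^ (1 - x)
          = (y + 1) ^ (1 - x) - (1 - x) * (y + 1) ^ (-x) := by
        rw [e2]; field_simp; ring
      rw [e3] at hb
      linarith
  intro hz
  rw [zeta₁_eq_tsum (by simpa using h0)] at hz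
  have ht : Tendsto (fun N ↦ (1 + ∑ n ∈ Finset.range N, zetaTerm n (x : ℂ)).re) atTop (𝓝 0) := by
    have := ((summable_zetaTerm (s := (x : ℂ)) (by simpa using h0)).hasSum.tendsto_sum_nat).const_add 1
    rw [hz] at this
    exact (continuous_re.tendsto' 0 0 zero_re).comp this
  have : x ≤ 0 := by
    refine ge_of_tendsto' ht (fun N ↦ ?_)
    rw [sum_zetaTerm]
    have e : ((x : ℂ) - 1) * ∑ n ∈ Finset.range N, ((n : ℂ) + 1) ^ (-(x : ℂ))
        + ((N : ℂ) + 1) ^ (1 - (x : ℂ)) = (((x - 1) * ∑ n ∈ Finset.range N, ((n : ℝ) + 1) ^ (-x)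
          + ((N : ℝ) + 1) ^ (1 - x) : ℝ) : ℂ) := by
      push_cast
      congr 1
      · congr 1
        refine Finset.sum_congr rfl (fun n _ ↦ ?_)
        rw [ofReal_cpow (by positivity)]; push_cast; rfl
      · rw [ofReal_cpow (by positivity)]; push_cast; rfl
    rw [e, ofReal_re]
    have h2 : 0 ≤ (1 - x) * ((N : ℝ) + 1) ^ (-x) :=
      mul_nonneg (by linarith) (by positivity)
    linarith [key N]
  linarith

lemma zeta_ne_zero_of_pos {x : ℝ} (h0 : 0 < x) : riemannZeta (x : ℂ) ≠ 0 := by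
  rcases lt_or_ge x 1 with h | h
  · have hne : (x : ℂ) ≠ 1 := by exact_mod_cast h.ne
    rw [riemannZeta_eq_inv_sub_mul hne]
    exact mul_ne_zero (inv_ne_zero (sub_ne_zero.mpr hne)) (zeta₁_ne_zero_of_mem_Ioo h0 h)
  · exact riemannZeta_ne_zero_of_one_le_re (by simpa using h)

/-! ### Growth on the whole plane and the trivial zeros -/

lemma norm_Gamma_le_Gamma_re {s : ℂ} (hs : 0 < s.re) : ‖Gamma s‖ ≤ Real.Gamma s.re := by
  rw [Gamma_eq_integral hs, GammaIntegral, Real.Gamma_eq_integral hs]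
  refine (MeasureTheory.norm_integral_le_integral_norm _).trans (le_of_eq ?_)
  refine MeasureTheory.setIntegral_congr_fun measurableSet_Ioi (fun x hx ↦ ?_)
  have hx' : (0 : ℝ) < x := hx
  simp only [norm_mul, norm_real, norm_cpow_eq_rpow_re_of_pos hx', sub_re, one_re]
  rw [Real.norm_of_nonneg (Real.exp_pos _).le]

lemma real_Gamma_le {x : ℝ} (hx : 1 / 2 ≤ x) : Real.Gamma x ≤ 2 * Real.exp ((x + 2) ^ 2) := by
  have h1 : Real.Gamma (x + 2) = (x + 1) * (x * Real.Gamma x) := by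
    rw [show x + 2 = (x + 1) + 1 by ring, Real.Gamma_add_one (by linarith),
      Real.Gamma_add_one (by linarith)]
  have hG : 0 < Real.Gamma x := Real.Gamma_pos_of_pos (by linarith)
  have h2 : Real.Gamma x ≤ 2 * Real.Gamma (x + 2) := by
    rw [h1]
    have : (1 : ℝ) / 2 ≤ (x + 1) * x := by nlinarith
    nlinarith
  refine h2.trans (by
    gcongr
    set n : ℕ := ⌈x⌉₊ with hn
    have hxn : x ≤ n := Nat.le_ceil x
    have hnx : (n : ℝ) < x + 1 := Nat.ceil_lt_add_one (by linarith)
    have h3 : Real.Gamma (x + 2) ≤ Real.Gamma (((n + 1 : ℕ) : ℝ) + 1) := by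
      refine Real.Gamma_strictMonoOn_Ici.monotoneOn ?_ ?_ ?_
      · simp only [Set.mem_Ici]; linarith
      · simp only [Set.mem_Ici]; push_cast; linarith
      · push_cast; linarith
    rw [Real.Gamma_nat_eq_factorial] at h3
    have h4 : (((n + 1).factorial : ℕ) : ℝ) ≤ ((n + 1 : ℕ) : ℝ) ^ (n + 1) := by
      exact_mod_cast Nat.factorial_le_pow (n + 1)
    have h5 : ((n + 1 : ℕ) : ℝ) ≤ Real.exp ((n + 1 : ℕ) : ℝ) := by
      linarith [Real.add_one_le_exp (((n + 1 : ℕ) : ℝ))]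
    calc Real.Gamma (x + 2) ≤ ((n + 1 : ℕ) : ℝ) ^ (n + 1) := h3.trans h4
      _ ≤ (Real.exp ((n + 1 : ℕ) : ℝ)) ^ (n + 1) := by gcongr
      _ = Real.exp (((n + 1 : ℕ) : ℝ) ^ 2) := by rw [← Real.exp_nat_mul]; congr 1; ring
      _ ≤ _ := by
        gcongr
        push_cast; linarith)

lemma norm_cos_le_exp (z : ℂ) : ‖cos z‖ ≤ Real.exp ‖z‖ := by
  have h1 : ‖exp (z * I)‖ ≤ Real.exp ‖z‖ := by
    refine (norm_exp_le_exp_norm _).trans (le_of_eq (by simp))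
  have h2 : ‖exp (-z * I)‖ ≤ Real.exp ‖z‖ := by
    refine (norm_exp_le_exp_norm _).trans (le_of_eq (by simp))
  rw [cos, norm_div]
  have := norm_add_le (exp (z * I)) (exp (-z * I))
  simp only [norm_ofNat]
  linarith

/-- `(s - 1) ζ(s)` is an entire function of order at most two. The exact order is one, but any
finite order suffices here. -/
lemma norm_zeta₁_le : ∃ C : ℝ, 0 < C ∧ ∀ s : ℂ, ‖riemannZeta₁ s‖ ≤ Real.exp (C * (1 + ‖s‖) ^ 2) := by
  obtain ⟨C, hC, hCb⟩ := norm_zeta₁_le_right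
  obtain ⟨B, hB⟩ := (isCompact_closedBall (0 : ℂ) 1).exists_bound_of_continuousOn
    (f := riemannZeta₁) differentiable_riemannZeta₁.continuous.continuousOn
  have hB0 : 0 ≤ B := (norm_nonneg _).trans (hB 0 (by simp))
  refine ⟨B + 4 * C + 100, by positivity, fun s ↦ ?_⟩
  set X : ℝ := 1 + ‖s‖ with hX
  have hX1 : 1 ≤ X := by linarith [norm_nonneg s]
  have hX2 : X ≤ X ^ 2 := by nlinarith
  have hself : ∀ y : ℝ, y ≤ Real.exp y := fun y ↦ by linarith [Real.add_one_le_exp y]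
  rcases le_or_gt ‖s‖ 1 with h1 | h1
  · refine (hB s (by simpa using h1)).trans ((hself B).trans ?_)
    gcongr
    nlinarith
  rcases le_or_gt (1 / 2) s.re with h2 | h2
  · refine (hCb s h2).trans ((hself _).trans ?_)
    gcongr
    linarith
  -- reflect to the right half-plane with the functional equation
  set u : ℂ := 1 - s with hu
  have hure : 1 / 2 < u.re := by simp [hu]; linarith
  have hun : ‖u‖ ≤ X := by
    have := norm_sub_le 1 s
    rwa [norm_one] at this
  have hs1 : s ≠ 1 := by rintro rfl; norm_num at h2
  have hu1 : u ≠ 1 := by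
    intro h
    have : s = 0 := by rw [hu] at h; linear_combination -h
    rw [this] at h1; norm_num at h1
  have hfe := riemannZeta_one_sub (s := u) (fun n h ↦ by
    rw [h] at hure; simp at hure; linarith [n.cast_nonneg (α := ℝ)]) hu1
  rw [show 1 - u = s by rw [hu]; ring, riemannZeta_eq_inv_sub_mul hs1,
    riemannZeta_eq_inv_sub_mul hu1] at hfe
  have hs1' : s - 1 ≠ 0 := sub_ne_zero.mpr hs1
  have hE : riemannZeta₁ s = (s - 1) *
      (2 * (2 * π) ^ (-u) * Gamma u * cos (π * u / 2) * ((u - 1)⁻¹ * riemannZeta₁ u)) := by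
    rw [← hfe]; field_simp
  have hu1n : ‖(u - 1)⁻¹‖ ≤ 1 := by
    rw [norm_inv, show u - 1 = -s by rw [hu]; ring, norm_neg]
    exact inv_le_one_of_one_le₀ h1.le
  have hsn : ‖s - 1‖ ≤ X := by rw [← norm_neg, neg_sub]; exact hun
  have hpow : ‖((2 : ℂ) * π) ^ (-u)‖ ≤ 1 := by
    have : ((2 : ℂ) * π) = ((2 * π : ℝ) : ℂ) := by push_cast; ring
    rw [this, norm_cpow_eq_rpow_re_of_pos (by positivity)]
    refine Real.rpow_le_one_of_one_le_of_nonpos (by nlinarith [Real.pi_gt_three]) ?_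
    simp only [neg_re]; linarith
  have hGam : ‖Gamma u‖ ≤ 2 * Real.exp (9 * X ^ 2) := by
    refine (norm_Gamma_le_Gamma_re (by linarith)).trans ((real_Gamma_le hure.le).trans ?_)
    have h3 : u.re ≤ X := (re_le_norm u).trans hun
    have : (u.re + 2) ^ 2 ≤ 9 * X ^ 2 := by nlinarith
    gcongr
  have hcos : ‖cos (π * u / 2)‖ ≤ Real.exp (2 * X ^ 2) := by
    refine (norm_cos_le_exp _).trans ?_
    have : ‖(π : ℂ) * u / 2‖ ≤ 2 * X ^ 2 := by
      simp only [norm_div, norm_mul, norm_real, norm_ofNat, Real.norm_of_nonneg Real.pi_pos.le]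
      have : π * ‖u‖ ≤ 4 * X := by
        have := Real.pi_le_four
        gcongr
      linarith
    gcongr
  have hEu : ‖riemannZeta₁ u‖ ≤ Real.exp (4 * C * X ^ 2) := by
    refine (hCb u hure.le).trans ((hself _).trans ?_)
    have : (1 + ‖u‖) ^ 2 ≤ 4 * X ^ 2 := by
      have : 1 + ‖u‖ ≤ 2 * X := by linarith
      nlinarith [norm_nonneg u]
    rw [mul_comm (4 : ℝ) C, mul_assoc]
    exact Real.exp_le_exp.mpr (mul_le_mul_of_nonneg_left this hC.le)
  rw [hE]
  simp only [norm_mul, norm_ofNat]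
  have hXe : X ≤ Real.exp (X ^ 2) := hX2.trans (hself _)
  have h4 : (4 : ℝ) ≤ Real.exp (4 * X ^ 2) := by
    refine le_trans ?_ (hself _); nlinarith
  calc ‖s - 1‖ * (2 * ‖((2 : ℂ) * π) ^ (-u)‖ * ‖Gamma u‖ * ‖cos (π * u / 2)‖ *
        (‖(u - 1)⁻¹‖ * ‖riemannZeta₁ u‖))
      ≤ X * (2 * 1 * (2 * Real.exp (9 * X ^ 2)) * Real.exp (2 * X ^ 2) *
        (1 * Real.exp (4 * C * X ^ 2))) := by gcongr
    _ = 4 * X * (Real.exp (9 * X ^ 2) * Real.exp (2 * X ^ 2) * Real.exp (4 * C * X ^ 2)) := by ring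
    _ ≤ Real.exp (4 * X ^ 2) * Real.exp (X ^ 2) *
        (Real.exp (9 * X ^ 2) * Real.exp (2 * X ^ 2) * Real.exp (4 * C * X ^ 2)) := by gcongr
    _ = Real.exp ((16 + 4 * C) * X ^ 2) := by
      simp only [← Real.exp_add]; congr 1; ring
    _ ≤ _ := Real.exp_le_exp.mpr (mul_le_mul_of_nonneg_right (by linarith) (by positivity))

/-- The zeros of zeta in the half-plane `re s ≤ 0` are the trivial ones, by the functional equation. -/
lemma riemannZeta_zero_of_re_nonpos {s : ℂ} (h : riemannZeta s = 0) (hs : s.re ≤ 0) :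
    ∃ n : ℕ, s = -2 * ((n : ℂ) + 1) := by
  set u : ℂ := 1 - s with hu
  have hure : 1 ≤ u.re := by simp [hu]; linarith
  have hu1 : u ≠ 1 := by
    intro h'
    have : s = 0 := by rw [hu] at h'; linear_combination -h'
    rw [this, riemannZeta_zero] at h; norm_num at h
  have hun : ∀ n : ℕ, u ≠ -n := fun n h ↦ by
    rw [h] at hure; simp at hure; linarith [n.cast_nonneg (α := ℝ)]
  have hfe := riemannZeta_one_sub (s := u) hun hu1
  rw [show 1 - u = s by rw [hu]; ring, h] at hfe
  have h2 : cos (π * u / 2) = 0 := by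
    by_contra hc
    refine absurd hfe.symm ?_
    refine mul_ne_zero (mul_ne_zero (mul_ne_zero (mul_ne_zero two_ne_zero ?_)
      (Gamma_ne_zero hun)) hc) (riemannZeta_ne_zero_of_one_le_re hure)
    rw [cpow_ne_zero_iff]
    left; simp [Real.pi_ne_zero]
  obtain ⟨k, hk⟩ := Complex.cos_eq_zero_iff.mp h2
  have hk' : u = 2 * k + 1 := by
    have : (π : ℂ) ≠ 0 := by simp [Real.pi_ne_zero]
    field_simp at hk
    linear_combination hk
  have hk0 : 0 < k := by
    have h3 : u.re = 2 * k + 1 := by rw [hk']; simp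
    rw [h3] at hure
    have : (0 : ℝ) ≤ k := by linarith
    have : 0 ≤ k := by exact_mod_cast this
    refine lt_of_le_of_ne this (fun h0 ↦ hu1 ?_)
    rw [hk', ← h0]; simp
  refine ⟨(k - 1).toNat, ?_⟩
  have : ((k - 1).toNat : ℤ) = k - 1 := Int.toNat_of_nonneg (by omega)
  have : ((k - 1).toNat : ℂ) = k - 1 := by exact_mod_cast congrArg (Int.cast : ℤ → ℂ) this
  rw [this]
  rw [hu] at hk'
  linear_combination hk' * (-1)

/-- The trivial zeros are simple, because the cosine in the functional equation has simple
zeros. -/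
lemma deriv_riemannZeta_trivial_ne_zero (n : ℕ) :
    deriv riemannZeta (-2 * ((n : ℂ) + 1)) ≠ 0 := by
  set s : ℂ := -2 * ((n : ℂ) + 1) with hs
  set u₀ : ℂ := 2 * ((n : ℂ) + 1) + 1 with hu₀
  have hsu : s = 1 - u₀ := by rw [hs, hu₀]; ring
  have hre : u₀.re = 2 * ((n : ℝ) + 1) + 1 := by simp [hu₀]
  have hre3 : 1 < u₀.re := by rw [hre]; linarith [n.cast_nonneg (α := ℝ)]
  have hs1 : s ≠ 1 := by
    intro h
    have : s.re = 1 := by rw [h]; simp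
    rw [hsu, sub_re, one_re] at this
    linarith
  have h1 : HasDerivAt (fun u : ℂ ↦ riemannZeta (1 - u)) (-deriv riemannZeta s) u₀ := by
    have h2 : HasDerivAt riemannZeta (deriv riemannZeta s) (1 - u₀) := by
      rw [← hsu]; exact (differentiableAt_riemannZeta hs1).hasDerivAt
    have h3 : HasDerivAt (fun u : ℂ ↦ 1 - u) (-1) u₀ := by
      simpa using (hasDerivAt_id u₀).const_sub 1
    have h5 := h2.comp u₀ h3
    rw [mul_neg_one] at h5
    exact h5
  set A : ℂ → ℂ := fun u ↦ 2 * (2 * π) ^ (-u) * Gamma u * riemannZeta u with hA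
  have hun : ∀ u : ℂ, 1 < u.re → ∀ n : ℕ, u ≠ -n := fun u hure n h ↦ by
    rw [h] at hure; simp at hure; linarith [n.cast_nonneg (α := ℝ)]
  have hu1 : ∀ u : ℂ, 1 < u.re → u ≠ 1 := fun u h1 h2 ↦ by rw [h2] at h1; simp at h1
  have h2pi : (2 : ℂ) * π ≠ 0 := by simp [Real.pi_ne_zero]
  have hAd : DifferentiableAt ℂ A u₀ := by
    refine DifferentiableAt.mul (DifferentiableAt.mul (DifferentiableAt.const_mul ?_ _)
      (differentiableAt_Gamma _ (hun _ hre3))) (differentiableAt_riemannZeta (hu1 _ hre3))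
    exact DifferentiableAt.const_cpow (by fun_prop) (Or.inl h2pi)
  have hA0 : A u₀ ≠ 0 := by
    refine mul_ne_zero (mul_ne_zero (mul_ne_zero two_ne_zero ?_)
      (Gamma_ne_zero (hun _ hre3))) (riemannZeta_ne_zero_of_one_le_re hre3.le)
    rw [cpow_ne_zero_iff]
    left; exact h2pi
  have harg : (π : ℂ) * u₀ / 2 = ((n + 1 : ℕ) : ℂ) * π + π / 2 := by
    rw [hu₀]; push_cast; ring
  have hcos0 : cos ((π : ℂ) * u₀ / 2) = 0 := by
    rw [Complex.cos_eq_zero_iff]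
    refine ⟨(n + 1 : ℕ), ?_⟩
    rw [harg]; push_cast; ring
  have hcosd : HasDerivAt (fun u : ℂ ↦ cos (π * u / 2)) (-sin (π * u₀ / 2) * (π / 2)) u₀ := by
    have : HasDerivAt (fun u : ℂ ↦ (π : ℂ) * u / 2) (π / 2) u₀ := by
      simpa using ((hasDerivAt_id u₀).const_mul (π : ℂ)).div_const 2
    exact this.ccos
  have hsin : sin ((π : ℂ) * u₀ / 2) ≠ 0 := by
    intro h
    have := sin_sq_add_cos_sq ((π : ℂ) * u₀ / 2)
    rw [h, hcos0] at this; norm_num at this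
  have h3 := hAd.hasDerivAt.mul hcosd
  rw [hcos0, mul_zero, zero_add] at h3
  have hev : (fun u : ℂ ↦ riemannZeta (1 - u)) =ᶠ[𝓝 u₀] (A * fun u : ℂ ↦ cos (π * u / 2)) := by
    have : {u : ℂ | 1 < u.re} ∈ 𝓝 u₀ :=
      (isOpen_lt continuous_const continuous_re).mem_nhds hre3
    filter_upwards [this] with u hu
    rw [riemannZeta_one_sub (hun u hu) (hu1 u hu)]
    simp only [hA, Pi.mul_apply]; ring
  have h4 := (h3.congr_of_eventuallyEq hev).unique h1
  intro h0
  rw [h0, neg_zero] at h4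
  refine mul_ne_zero hA0 (mul_ne_zero (neg_ne_zero.mpr hsin) ?_) h4
  simp [Real.pi_ne_zero]

/-- The Dirichlet series `-ζ'/ζ = ∑ Λ(n) n ^ (-s)` starts at `n = 2`, whence exponential decay to the
right. -/
lemma norm_logDeriv_zeta_le : ∃ C : ℝ, 0 < C ∧ ∀ s : ℂ, 2 ≤ s.re →
    ‖deriv riemannZeta s / riemannZeta s‖ ≤ C * (2 : ℝ) ^ (-s.re) := by
  have hsum : LSeriesSummable (fun n ↦ (ArithmeticFunction.vonMangoldt n : ℂ)) 2 :=
    ArithmeticFunction.LSeriesSummable_vonMangoldt (by norm_num)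
  have hsum' : Summable (fun n ↦ ‖LSeries.term (fun n ↦ (ArithmeticFunction.vonMangoldt n : ℂ)) 2 n‖) :=
    hsum.norm
  set T := ∑' n, ‖LSeries.term (fun n ↦ (ArithmeticFunction.vonMangoldt n : ℂ)) 2 n‖ with hT
  have hT0 : 0 ≤ T := tsum_nonneg (fun _ ↦ norm_nonneg _)
  refine ⟨4 * T + 1, by positivity, fun s hs ↦ ?_⟩
  have h1 := ArithmeticFunction.LSeries_vonMangoldt_eq_deriv_riemannZeta_div (s := s) (by linarith)
  have h2 : ‖deriv riemannZeta s / riemannZeta s‖ =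
      ‖LSeries (fun n => (ArithmeticFunction.vonMangoldt n : ℂ)) s‖ := by
    rw [h1, neg_div, norm_neg]
  rw [h2, LSeries]
  have h3 : ‖∑' n, LSeries.term (fun n ↦ (ArithmeticFunction.vonMangoldt n : ℂ)) s n‖ ≤
      ∑' n, (4 * (2 : ℝ) ^ (-s.re)) *
        ‖LSeries.term (fun n ↦ (ArithmeticFunction.vonMangoldt n : ℂ)) 2 n‖ := by
    refine tsum_of_norm_bounded (hsum'.mul_left _).hasSum (fun n ↦ ?_)
    rcases Nat.lt_or_ge n 2 with hn | hn
    · interval_cases n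
      · simp
      · simp [LSeries.term]
    · have hn0 : n ≠ 0 := by omega
      rw [LSeries.term_of_ne_zero hn0, LSeries.term_of_ne_zero hn0, norm_div, norm_div,
        norm_natCast_cpow_of_pos (by omega), norm_natCast_cpow_of_pos (by omega)]
      rw [div_eq_mul_inv, div_eq_mul_inv, ← mul_assoc, mul_comm (4 * _) ‖_‖, mul_assoc]
      gcongr
      have hnn : (2 : ℝ) ≤ n := by exact_mod_cast hn
      have e1 : ((n : ℝ) ^ s.re)⁻¹ = (n : ℝ) ^ (-(s.re - 2)) * ((n : ℝ) ^ (2 : ℂ).re)⁻¹ := by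
        rw [← Real.rpow_neg (by positivity), ← Real.rpow_neg (by positivity),
          ← Real.rpow_add (by positivity)]
        congr 1; simp; ring
      have e2 : (4 : ℝ) * 2 ^ (-s.re) = 2 ^ (-(s.re - 2)) := by
        rw [show -(s.re - 2) = 2 + -s.re by ring, Real.rpow_add (by norm_num)]
        norm_num
      rw [e1, e2]
      gcongr ?_ * _
      exact Real.rpow_le_rpow_of_nonpos (by norm_num) hnn (by linarith)
  rw [tsum_mul_left, ← hT] at h3
  refine h3.trans ?_
  have : 0 ≤ (2 : ℝ) ^ (-s.re) := by positivity
  nlinarith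

/-! ### Zeros and logarithmic derivatives of entire functions of finite order -/

/-- Finitely many distinct zeros of an entire function can be divided out. -/
lemma exists_factor {F : ℂ → ℂ} (hF : Differentiable ℂ F) (A : Finset ℂ)
    (hA : ∀ ρ ∈ A, F ρ = 0 ∧ ρ ≠ 0) :
    ∃ q : ℂ → ℂ, Differentiable ℂ q ∧ ∀ w, F w = (∏ ρ ∈ A, (1 - w / ρ)) * q w := by
  classical
  induction A using Finset.induction with
  | empty => exact ⟨F, hF, by simp⟩
  | insert ρ A hρ ih =>
    obtain ⟨q, hq, hFq⟩ := ih (fun ρ' h ↦ hA ρ' (Finset.mem_insert_of_mem h))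
    obtain ⟨h0, hne⟩ := hA ρ (Finset.mem_insert_self _ _)
    have hq0 : q ρ = 0 := by
      have h1 := hFq ρ
      rw [h0] at h1
      refine (mul_eq_zero.mp h1.symm).resolve_left (Finset.prod_ne_zero_iff.mpr fun σ hσ h ↦ ?_)
      have hσ0 := (hA σ (Finset.mem_insert_of_mem hσ)).2
      have : ρ = σ := by
        rw [sub_eq_zero, eq_comm, div_eq_one_iff_eq hσ0] at h; exact h
      exact hρ (this ▸ hσ)
    refine ⟨fun w ↦ -ρ * dslope q ρ w, ?_, fun w ↦ ?_⟩
    · have : Differentiable ℂ (dslope q ρ) := by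
        rw [← differentiableOn_univ] at hq ⊢
        exact (Complex.differentiableOn_dslope univ_mem).mpr hq
      exact this.const_mul _
    · rw [Finset.prod_insert hρ, hFq w]
      have h2 : q w = (w - ρ) * dslope q ρ w := by
        have := sub_smul_dslope q ρ w
        rw [hq0, sub_zero, smul_eq_mul] at this
        exact this.symm
      rw [h2]
      field_simp
      ring

/-- If the zeros that are divided out lie deep inside the disc, then the cofactor is bounded on
the disc by the values of `F` on the circle. -/
lemma norm_cofactor_le {F q : ℂ → ℂ} (hq : Differentiable ℂ q) {A : Finset ℂ}
    (hFq : ∀ w, F w = (∏ ρ ∈ A, (1 - w / ρ)) * q w) {r c B R : ℝ} (hr : 0 < r) (hc : 0 < c)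
    (hR : R = (c + 1) * r)
    (hA : ∀ ρ ∈ A, ρ ≠ 0 ∧ ‖ρ‖ ≤ r) (hB : ∀ w, ‖w‖ = R → ‖F w‖ ≤ B) {w : ℂ} (hw : ‖w‖ ≤ R) :
    c ^ A.card * ‖q w‖ ≤ B := by
  have hRpos : 0 < R := by rw [hR]; positivity
  have key : ∀ w ∈ frontier (Metric.ball (0 : ℂ) R), ‖q w‖ ≤ B / c ^ A.card := by
    intro w hw
    rw [frontier_ball _ hRpos.ne'] at hw
    have hw' : ‖w‖ = R := by simpa using hw
    rw [le_div_iff₀ (by positivity)]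
    refine le_trans ?_ (hB w hw')
    rw [hFq w, norm_mul, mul_comm, norm_prod]
    gcongr
    rw [← Finset.prod_const]
    refine Finset.prod_le_prod (fun _ _ ↦ hc.le) (fun ρ hρ ↦ ?_)
    obtain ⟨h0, h1⟩ := hA ρ hρ
    have h2 : c + 1 ≤ ‖w / ρ‖ := by
      rw [norm_div, hw', le_div_iff₀ (norm_pos_iff.mpr h0), hR]
      gcongr
    have h3 := norm_sub_norm_le (w / ρ) 1
    rw [norm_one, norm_sub_rev] at h3
    linarith
  have := norm_le_of_forall_mem_frontier_norm_le Metric.isBounded_ball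
    (hq.diffContOnCl) key (z := w)
    (by rw [closure_ball _ hRpos.ne']; simpa using hw)
  rwa [le_div_iff₀ (by positivity), mul_comm] at this

/-- A weak form of Jensen's bound: an entire function of order at most two has `O(r ^ 2)` zeros in the
disc of radius `r`. -/
lemma card_zeros_le {F : ℂ → ℂ} (hF : Differentiable ℂ F) (hF0 : F 0 ≠ 0) {C : ℝ} (hC : 0 < C)
    (hb : ∀ w, ‖F w‖ ≤ Real.exp (C * (1 + ‖w‖) ^ 2)) :
    ∃ D : ℝ, 0 < D ∧ ∀ r : ℝ, 1 ≤ r → ∀ A : Finset ℂ, (∀ ρ ∈ A, F ρ = 0 ∧ ‖ρ‖ ≤ r) →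
      (A.card : ℝ) ≤ D * (1 + r) ^ 2 := by
  have hl2 : 0 < Real.log 2 := Real.log_pos (by norm_num)
  refine ⟨(9 * C + |Real.log ‖F 0‖|) / Real.log 2, by positivity, fun r hr A hA ↦ ?_⟩
  have hne : ∀ ρ ∈ A, ρ ≠ 0 := fun ρ hρ h ↦ hF0 (h ▸ (hA ρ hρ).1)
  obtain ⟨q, hq, hFq⟩ := exists_factor hF A (fun ρ h ↦ ⟨(hA ρ h).1, hne ρ h⟩)
  have h1 := norm_cofactor_le hq hFq (r := r) (c := 2) (R := 3 * r)
    (B := Real.exp (C * (1 + 3 * r) ^ 2)) (by linarith) (by norm_num) (by ring)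
    (fun ρ h ↦ ⟨hne ρ h, (hA ρ h).2⟩) (fun w hw ↦ hw ▸ hb w) (w := 0) (by simp; linarith)
  have hq0 : q 0 = F 0 := by rw [hFq 0]; simp
  have hF0' : 0 < ‖F 0‖ := norm_pos_iff.mpr hF0
  rw [hq0] at h1
  have h2 := Real.log_le_log (by positivity) h1
  rw [Real.log_exp, Real.log_mul (by positivity) hF0'.ne', Real.log_pow] at h2
  rw [div_mul_eq_mul_div, le_div_iff₀ hl2]
  have h3 := neg_abs_le (Real.log ‖F 0‖)
  have h4 : C * (1 + 3 * r) ^ 2 ≤ 9 * C * (1 + r) ^ 2 := by nlinarith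
  have h5 : |Real.log ‖F 0‖| ≤ |Real.log ‖F 0‖| * (1 + r) ^ 2 :=
    le_mul_of_one_le_right (abs_nonneg _) (one_le_pow₀ (by linarith))
  nlinarith

lemma finite_zeros {F : ℂ → ℂ} (hF : Differentiable ℂ F) (hF0 : F 0 ≠ 0) {C : ℝ} (hC : 0 < C)
    (hb : ∀ w, ‖F w‖ ≤ Real.exp (C * (1 + ‖w‖) ^ 2)) (r : ℝ) :
    {ρ : ℂ | F ρ = 0 ∧ ‖ρ‖ ≤ r}.Finite := by
  obtain ⟨D, -, h⟩ := card_zeros_le hF hF0 hC hb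
  by_contra hinf
  obtain ⟨A, hA, hcard⟩ := Set.Infinite.exists_subset_card_eq hinf
    (⌊D * (1 + max 1 r) ^ 2⌋₊ + 1)
  have := h (max 1 r) (le_max_left _ _) A (fun ρ hρ ↦
    ⟨(hA hρ).1, (hA hρ).2.trans (le_max_right _ _)⟩)
  rw [hcard] at this
  have h2 := Nat.lt_floor_add_one (D * (1 + max 1 r) ^ 2)
  push_cast at this
  linarith

/-- A zero-free function on a disc whose modulus is controlled there has controlled logarithmic
derivative on the concentric disc of half the radius, by the Borel–Carathéodory inequality for its
holomorphic logarithm and Cauchy's estimate. -/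
lemma norm_logDeriv_le_of_ne_zero {q : ℂ → ℂ} (hq : Differentiable ℂ q) {r M : ℝ} (hr : 1 ≤ r)
    (hM : 0 < M) (h0 : ∀ w, ‖w‖ < 2 * r → q w ≠ 0)
    (hb : ∀ w, ‖w‖ < 2 * r → ‖q w‖ ≤ ‖q 0‖ * Real.exp M) {w : ℂ} (hw : ‖w‖ ≤ r) :
    ‖deriv q w / q w‖ ≤ 12 * M := by
  have hmem : ∀ {z : ℂ}, z ∈ Metric.ball (0 : ℂ) (2 * r) ↔ ‖z‖ < 2 * r := by simp
  have hd : DifferentiableOn ℂ (fun z ↦ deriv q z / q z) (Metric.ball 0 (2 * r)) := by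
    refine DifferentiableOn.div ?_ hq.differentiableOn (fun z hz ↦ h0 z (hmem.mp hz))
    exact hq.differentiableOn.deriv Metric.isOpen_ball
  obtain ⟨g, hg0, hg⟩ := hd.isExactOn_ball.with_val_at 0 0
  have hq0 : q 0 ≠ 0 := h0 0 (by simp; linarith)
  have hconst : ∀ z ∈ Metric.ball (0 : ℂ) (2 * r), q z * exp (-g z) = q 0 := by
    intro z hz
    have hdz : ∀ z ∈ Metric.ball (0 : ℂ) (2 * r),
        HasDerivAt (fun z ↦ q z * exp (-g z)) 0 z := by
      intro z hz
      have h1 := (hq z).hasDerivAt.mul (hg z hz).neg.cexp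
      have hqz := h0 z (hmem.mp hz)
      have e : deriv q z * exp (-g z) + q z * (exp (-g z) * -(deriv q z / q z)) = 0 := by
        field_simp
        ring
      exact e ▸ h1
    have := (convex_ball (0 : ℂ) (2 * r)).is_const_of_fderivWithin_eq_zero (𝕜 := ℂ)
      (f := fun z ↦ q z * exp (-g z))
      (fun z hz ↦ (hdz z hz).differentiableAt.differentiableWithinAt)
      (fun z hz ↦ by
        rw [fderivWithin_of_isOpen Metric.isOpen_ball hz]
        have := (hdz z hz).hasFDerivAt.fderiv
        rw [this]; ext; simp) hz (Metric.mem_ball_self (by linarith))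
    simpa [hg0] using this
  have hre : ∀ z ∈ Metric.ball (0 : ℂ) (2 * r), (g z).re ≤ M := by
    intro z hz
    have h1 : q z = q 0 * exp (g z) := by
      rw [← hconst z hz, mul_assoc, ← exp_add]; simp
    have h2 := hb z (hmem.mp hz)
    rw [h1, norm_mul, norm_exp] at h2
    have := le_of_mul_le_mul_left h2 (norm_pos_iff.mpr hq0)
    exact Real.exp_le_exp.mp this
  have hgd : DifferentiableOn ℂ g (Metric.ball 0 (2 * r)) :=
    fun z hz ↦ (hg z hz).differentiableAt.differentiableWithinAt
  have hbound : ∀ z : ℂ, ‖z‖ ≤ 3 / 2 * r → ‖g z‖ ≤ 6 * M := by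
    intro z hz
    have h1 := borelCaratheodory_zero hM hgd hre (by linarith)
      (hmem.mpr (by linarith : ‖z‖ < 2 * r)) hg0
    refine h1.trans ?_
    rw [div_le_iff₀ (by linarith)]
    nlinarith
  have hcl : Metric.closedBall w (r / 2) ⊆ Metric.ball 0 (2 * r) := by
    intro z hz
    rw [hmem]
    have : ‖z - w‖ ≤ r / 2 := by simpa [dist_eq_norm] using hz
    have := norm_le_norm_sub_add z w
    linarith
  have h3 := norm_deriv_le_of_forall_mem_sphere_norm_le (f := g) (c := w) (R := r / 2)
    (C := 6 * M) (by linarith) ((hgd.mono hcl).diffContOnCl_ball subset_rfl) (fun z hz ↦ by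
      refine hbound z ?_
      have : ‖z - w‖ = r / 2 := by simpa [dist_eq_norm] using hz
      have := norm_le_norm_sub_add z w
      linarith)
  rw [(hg w (hmem.mpr (by linarith))).deriv] at h3
  refine h3.trans ?_
  rw [div_le_iff₀ (by linarith)]
  nlinarith

/-- Every interval of length one contains a radius that keeps a definite distance from the moduli of
finitely many given points: the excluded intervals have total length less than one. -/
lemma exists_radius (A : Finset ℂ) {α β : ℝ} (h : α + 1 ≤ β) :
    ∃ r ∈ Icc α β, ∀ ρ ∈ A, 1 / (4 * ((A.card : ℝ) + 1)) ≤ |‖ρ‖ - r| := by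
  by_contra hcon
  push Not at hcon
  set δ : ℝ := 1 / (4 * ((A.card : ℝ) + 1)) with hδ
  have hδ0 : 0 < δ := by positivity
  have hsub : Icc α β ⊆ ⋃ ρ ∈ A, Metric.ball ‖ρ‖ δ := by
    intro r hr
    obtain ⟨ρ, hρ, h1⟩ := hcon r hr
    simp only [mem_iUnion]
    exact ⟨ρ, hρ, by rw [Metric.mem_ball, Real.dist_eq, abs_sub_comm]; exact h1⟩
  have h1 := MeasureTheory.measure_mono (μ := MeasureTheory.volume) hsub
  have h2 := h1.trans (MeasureTheory.measure_biUnion_finset_le A _)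
  simp only [Real.volume_Icc, Real.volume_ball, Finset.sum_const, nsmul_eq_mul] at h2
  rw [← ENNReal.ofReal_natCast, ← ENNReal.ofReal_mul (by positivity),
    ENNReal.ofReal_le_ofReal_iff (by positivity)] at h2
  have h3 : (A.card : ℝ) * (2 * δ) < 1 := by
    rw [hδ, mul_div_assoc', mul_div_assoc', div_lt_one (by positivity)]
    linarith [A.card.cast_nonneg (α := ℝ)]
  linarith

/-- An entire function of order at most two with simple zeros has polynomially bounded logarithmic
derivative on suitable circles: the zeros of modulus at most `2 β` contribute `∑ 1 / (w - ρ)`, which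
is small when the circle keeps away from them, and the zero-free cofactor is controlled by
`norm_logDeriv_le_of_ne_zero`. -/
lemma exists_good_radius {F : ℂ → ℂ} (hF : Differentiable ℂ F) (hF0 : F 0 ≠ 0) {C : ℝ} (hC : 0 < C)
    (hb : ∀ w, ‖F w‖ ≤ Real.exp (C * (1 + ‖w‖) ^ 2))
    (hsimple : ∀ w, F w = 0 → deriv F w ≠ 0) :
    ∃ D : ℝ, 0 < D ∧ ∀ α β : ℝ, 1 ≤ α → α + 1 ≤ β → ∃ r ∈ Icc α β, ∀ w : ℂ, ‖w‖ = r →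
      F w ≠ 0 ∧ ‖deriv F w / F w‖ ≤ D * (1 + β) ^ 4 := by
  obtain ⟨D, hD, hcard⟩ := card_zeros_le hF hF0 hC hb
  set L : ℝ := |Real.log ‖F 0‖| with hL
  refine ⟨4 * (4 * D) * (4 * D + 1) + 12 * (16 * C + L + 1), by positivity,
    fun α β hα hαβ ↦ ?_⟩
  have hfin := finite_zeros hF hF0 hC hb (2 * β)
  set A : Finset ℂ := hfin.toFinset with hAdef
  have hA : ∀ ρ, ρ ∈ A ↔ F ρ = 0 ∧ ‖ρ‖ ≤ 2 * β := fun ρ ↦ by simp [hAdef]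
  have hβ : 1 ≤ β := by linarith
  obtain ⟨N, hN⟩ : ∃ N : ℝ, (A.card : ℝ) = N := ⟨_, rfl⟩
  have hN0 : 0 ≤ N := hN ▸ Nat.cast_nonneg _
  have hN1 : 0 < 4 * (N + 1) := by linarith
  have hNle : N ≤ 4 * D * (1 + β) ^ 2 := by
    refine (hN ▸ hcard (2 * β) (by linarith) A (fun ρ h ↦ (hA ρ).mp h)).trans ?_
    have : (1 + 2 * β) ^ 2 ≤ 4 * (1 + β) ^ 2 := by nlinarith
    nlinarith
  obtain ⟨r, hr, hsep⟩ := exists_radius A hαβ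
  rw [hN] at hsep
  refine ⟨r, hr, fun w hw ↦ ?_⟩
  have hwβ : ‖w‖ ≤ β := hw ▸ hr.2
  have hδ : ∀ ρ ∈ A, 1 / (4 * (N + 1)) ≤ ‖ρ - w‖ := fun ρ hρ ↦
    (hsep ρ hρ).trans (hw ▸ abs_norm_sub_norm_le ρ w)
  have hFw : F w ≠ 0 := by
    intro h
    have := hδ w ((hA w).mpr ⟨h, by linarith⟩)
    rw [sub_self, norm_zero] at this
    have : 0 < 1 / (4 * (N + 1)) := by positivity
    linarith
  refine ⟨hFw, ?_⟩
  have hne : ∀ ρ ∈ A, ρ ≠ 0 := fun ρ hρ h ↦ hF0 (h ▸ ((hA ρ).mp hρ).1)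
  obtain ⟨q, hq, hFq⟩ := exists_factor hF A (fun ρ h ↦ ⟨((hA ρ).mp h).1, hne ρ h⟩)
  have hq0 : q 0 = F 0 := by rw [hFq 0]; simp
  set P : ℂ → ℂ := fun w ↦ ∏ ρ ∈ A, (1 - w / ρ) with hP
  have hPd : Differentiable ℂ P := by
    rw [hP]; fun_prop
  have hFP : F = fun w ↦ P w * q w := funext hFq
  have hderiv : ∀ z, deriv F z = deriv P z * q z + P z * deriv q z := fun z ↦ by
    rw [hFP]; exact deriv_fun_mul (hPd z) (hq z)
  have hqne : ∀ z, ‖z‖ < 2 * β → q z ≠ 0 := by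
    intro z hz h0
    have hFz : F z = 0 := by rw [hFq z, h0, mul_zero]
    have hPz : P z = 0 := Finset.prod_eq_zero ((hA z).mpr ⟨hFz, hz.le⟩) (by
      rw [div_self (hne z ((hA z).mpr ⟨hFz, hz.le⟩)), sub_self])
    exact hsimple z hFz (by rw [hderiv, h0, hPz]; simp)
  have hF0' : 0 < ‖F 0‖ := norm_pos_iff.mpr hF0
  set M : ℝ := C * (1 + 4 * β) ^ 2 + L + 1 with hM
  have hqb : ∀ z, ‖z‖ < 2 * β → ‖q z‖ ≤ ‖q 0‖ * Real.exp M := by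
    intro z hz
    have h1 := norm_cofactor_le hq hFq (r := 2 * β) (c := 1) (R := 4 * β)
      (B := Real.exp (C * (1 + 4 * β) ^ 2)) (by linarith) (by norm_num) (by ring)
      (fun ρ h ↦ ⟨hne ρ h, ((hA ρ).mp h).2⟩) (fun w hw ↦ hw ▸ hb w) (w := z) (by linarith)
    rw [one_pow, one_mul] at h1
    refine h1.trans ?_
    rw [hq0, ← Real.exp_log hF0', ← Real.exp_add, Real.exp_le_exp]
    have := neg_abs_le (Real.log ‖F 0‖)
    linarith
  have hlogq := norm_logDeriv_le_of_ne_zero hq hβ (by positivity : 0 < M) hqne hqb hwβ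
  have hqw : q w ≠ 0 := hqne w (by linarith)
  have hPw : P w ≠ 0 := fun h ↦ hFw (by rw [hFq w]; exact mul_eq_zero_of_left h _)
  have hlogP : deriv P w / P w = ∑ ρ ∈ A, (-1) / (ρ - w) := by
    have h1 : logDeriv P w = ∑ ρ ∈ A, logDeriv (fun z ↦ 1 - z / ρ) w := by
      have h2 := Finset.prod_ne_zero_iff.mp hPw
      have := logDeriv_prod (f := fun ρ z ↦ 1 - z / ρ) h2 (fun ρ _ ↦ by fun_prop)
      exact this
    rw [← logDeriv_apply, h1]
    refine Finset.sum_congr rfl (fun ρ hρ ↦ ?_)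
    have h3 : HasDerivAt (fun z : ℂ ↦ 1 - z / ρ) (-(1 / ρ)) w := by
      simpa using ((hasDerivAt_id w).div_const ρ).const_sub 1
    rw [logDeriv_apply, h3.deriv]
    have hρ0 := hne ρ hρ
    have h4 : ρ - w ≠ 0 := sub_ne_zero.mpr (fun h ↦ hFw (h ▸ ((hA ρ).mp hρ).1))
    have h5 : 1 - w / ρ = (ρ - w) / ρ := by field_simp
    rw [h5]
    field_simp
  have hPb : ‖deriv P w / P w‖ ≤ N * (4 * (N + 1)) := by
    rw [hlogP]
    refine (norm_sum_le _ _).trans ?_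
    rw [← hN, ← nsmul_eq_mul, hN]
    refine Finset.sum_le_card_nsmul _ _ _ (fun ρ hρ ↦ ?_)
    rw [norm_div, norm_neg, norm_one]
    have := hδ ρ hρ
    have hpos : 0 < ‖ρ - w‖ := lt_of_lt_of_le (one_div_pos.mpr hN1) this
    rw [div_le_iff₀ hN1] at this
    rw [div_le_iff₀ hpos]
    linarith
  have hsplit : deriv F w / F w = deriv P w / P w + deriv q w / q w := by
    rw [hderiv, hFq w]
    change _ / (P w * q w) = _
    field_simp
  rw [hsplit]
  refine (norm_add_le _ _).trans ((add_le_add hPb hlogq).trans ?_)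
  set Y : ℝ := (1 + β) ^ 2 with hY
  have hY1 : 1 ≤ Y := one_le_pow₀ (by linarith)
  have hY2 : Y ≤ Y ^ 2 := by nlinarith
  have e : (1 + β) ^ 4 = Y ^ 2 := by rw [hY]; ring
  rw [e]
  have h1 : N * (4 * (N + 1)) ≤ (4 * D * Y) * (4 * ((4 * D + 1) * Y)) := by
    have : N + 1 ≤ (4 * D + 1) * Y := by linarith
    exact mul_le_mul hNle (by linarith) hN1.le (hN0.trans hNle)
  have h2 : M ≤ (16 * C + L + 1) * Y ^ 2 := by
    have h3 : (1 + 4 * β) ^ 2 ≤ 16 * Y := by rw [hY]; nlinarith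
    have h4 : C * (1 + 4 * β) ^ 2 ≤ 16 * C * Y ^ 2 := by nlinarith
    have h5 : 1 ≤ Y ^ 2 := by linarith
    have h6 : 0 ≤ L := abs_nonneg _
    nlinarith
  nlinarith

/-! ### The denominator -/

/-- The entire function `G` with `G (z ^ 2) = z * sin (π * z)`. The choice of the square root is
immaterial because `z * sin (π * z)` is even. -/
noncomputable def sqrtSin (u : ℂ) : ℂ := u ^ ((1 : ℂ) / 2) * sin (π * u ^ ((1 : ℂ) / 2))

lemma cpow_half_sq (u : ℂ) : (u ^ ((1 : ℂ) / 2)) ^ 2 = u := by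
  have := cpow_nat_inv_pow u (n := 2) (by norm_num)
  rw [one_div]; exact_mod_cast this

lemma sqrtSin_sq (z : ℂ) : sqrtSin (z ^ 2) = z * sin (π * z) := by
  rw [sqrtSin]
  rcases sq_eq_sq_iff_eq_or_eq_neg.mp (cpow_half_sq (z ^ 2)) with h | h
  · rw [h]
  · rw [h, mul_neg, sin_neg]; ring

lemma differentiable_sqrtSin : Differentiable ℂ sqrtSin := by
  have h1 : ∀ u : ℂ, u ≠ 0 → DifferentiableAt ℂ sqrtSin u := by
    intro u hu
    by_cases hs : u ∈ slitPlane
    · have : DifferentiableAt ℂ (fun u : ℂ ↦ u ^ ((1 : ℂ) / 2)) u :=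
        differentiableAt_id.cpow_const hs
      unfold sqrtSin
      fun_prop
    · have hs' : -u ∈ slitPlane := by
        rw [mem_slitPlane_iff] at hs ⊢
        push Not at hs
        left
        refine lt_of_le_of_ne (by simpa using hs.1) (fun h ↦ hu ?_)
        exact Complex.ext (by simpa using h) (by simpa using hs.2)
      have h2 : DifferentiableAt ℂ (fun u : ℂ ↦ (-u) ^ ((1 : ℂ) / 2)) u :=
        differentiableAt_id.neg.cpow_const hs'
      have h3 : sqrtSin = fun u ↦ (I * (-u) ^ ((1 : ℂ) / 2)) *
          sin (π * (I * (-u) ^ ((1 : ℂ) / 2))) := by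
        ext v
        rw [← sqrtSin_sq, mul_pow, cpow_half_sq, I_sq]; simp
      rw [h3]
      fun_prop
  have h0 : ContinuousAt sqrtSin 0 := by
    have : ContinuousAt (fun u : ℂ ↦ u ^ ((1 : ℂ) / 2)) 0 :=
      continuousAt_cpow_const_of_re_pos (by simp) (by norm_num)
    unfold sqrtSin
    exact this.mul (by
      have h2 : ContinuousAt (fun x : ℂ ↦ sin (π * x)) ((0 : ℂ) ^ ((1 : ℂ) / 2)) := by fun_prop
      exact ContinuousAt.comp (g := fun x : ℂ ↦ sin (π * x)) h2 this)
  have := (Complex.differentiableOn_compl_singleton_and_continuousAt_iff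
    (s := univ) (c := (0 : ℂ)) (f := sqrtSin) univ_mem).mp
    ⟨fun u hu ↦ (h1 u (by simpa using hu)).differentiableWithinAt, h0⟩
  exact differentiableOn_univ.mp this

lemma deriv_sqrtSin_zero : deriv sqrtSin 0 = π := by
  have h1 := (differentiable_sqrtSin 0).hasDerivAt.tendsto_slope_zero
  have h2 : Tendsto (fun z : ℂ ↦ z ^ 2) (𝓝[≠] 0) (𝓝[≠] 0) := by
    refine tendsto_nhdsWithin_iff.mpr ⟨?_, ?_⟩
    · have : ContinuousAt (fun z : ℂ ↦ z ^ 2) 0 := by fun_prop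
      simpa [ContinuousAt] using this.tendsto.mono_left nhdsWithin_le_nhds
    · filter_upwards [self_mem_nhdsWithin] with z hz
      exact pow_ne_zero 2 hz
  have h3 := h1.comp h2
  have h4 : HasDerivAt (fun z : ℂ ↦ sin (π * z)) π 0 := by
    have := ((hasDerivAt_id (0 : ℂ)).const_mul (π : ℂ)).csin
    simpa using this
  have h5 := h4.tendsto_slope_zero
  refine tendsto_nhds_unique (h3.congr' ?_) h5
  filter_upwards [self_mem_nhdsWithin] with z hz
  have hz' : z ≠ 0 := hz
  have h00 : sqrtSin 0 = 0 := by simpa using sqrtSin_sq 0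
  simp only [Function.comp_apply, zero_add, sqrtSin_sq, h00, smul_eq_mul]
  simp
  field_simp

lemma deriv_sqrtSin_nat {m : ℕ} (hm : m ≠ 0) :
    deriv sqrtSin ((m : ℂ) ^ 2) = π * (-1) ^ m / 2 := by
  have hm' : (m : ℂ) ≠ 0 := by exact_mod_cast hm
  have h1 := (differentiable_sqrtSin ((m : ℂ) ^ 2)).hasDerivAt
  have h2 := HasDerivAt.comp (m : ℂ) h1 (hasDerivAt_pow 2 (m : ℂ))
  have h3 : HasDerivAt (fun z : ℂ ↦ z * sin (π * z)) (π * m * (-1) ^ m) (m : ℂ) := by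
    have := (hasDerivAt_id (m : ℂ)).mul (((hasDerivAt_id (m : ℂ)).const_mul (π : ℂ)).csin)
    have e1 : sin (π * (m : ℂ)) = 0 := by rw [mul_comm]; exact sin_nat_mul_pi m
    have e2 : cos (π * (m : ℂ)) = (-1) ^ m := by
      rw [mul_comm]
      exact_mod_cast congrArg ((↑) : ℝ → ℂ) (Real.cos_nat_mul_pi m)
    simp only [id, e1, e2] at this
    have e : 1 * (0 : ℂ) + m * ((-1) ^ m * (π * 1)) = π * m * (-1) ^ m := by ring
    rw [e] at this
    exact this
  have h4 : sqrtSin ∘ (fun z : ℂ ↦ z ^ 2) = fun z ↦ z * sin (π * z) :=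
    funext fun z ↦ sqrtSin_sq z
  rw [h4] at h2
  have h5 := h2.unique h3
  simp at h5
  have : (m : ℂ) * (deriv sqrtSin ((m : ℂ) ^ 2) * 2 - π * (-1) ^ m) = 0 := by linear_combination h5
  have := (mul_eq_zero.mp this).resolve_left hm'
  linear_combination this / 2

/-- The denominator `√(a w - a²) sinh (π √(a w - a²) / (2 a))`, as a function of `w`. It is
entire, because the product does not depend on the choice of the square root. -/
noncomputable def sinhDen (a : ℝ) (w : ℂ) : ℂ :=
  ((a : ℂ) * w - (a : ℂ) ^ 2) ^ ((1 : ℂ) / 2) *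
    sinh (π * ((a : ℂ) * w - (a : ℂ) ^ 2) ^ ((1 : ℂ) / 2) / (2 * (a : ℂ)))

/-- In the coordinate `z` with `w = a - 4 a z ^ 2`, the hyperbolic sine becomes a sine. -/
lemma sinhDen_eq {a : ℝ} (ha : a ≠ 0) {w z : ℂ} (h : w = a - 4 * a * z ^ 2) :
    sinhDen a w = -2 * a * (z * sin (π * z)) := by
  have ha' : (a : ℂ) ≠ 0 := by exact_mod_cast ha
  have h1 : (((a : ℂ) * w - (a : ℂ) ^ 2) ^ ((1 : ℂ) / 2)) ^ 2 = (2 * a * z * I) ^ 2 := by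
    rw [cpow_half_sq, h, mul_pow _ I, I_sq]; ring
  have h2 : sinh (π * (2 * a * z * I) / (2 * (a : ℂ))) = sin (π * z) * I := by
    rw [← sinh_mul_I]; congr 1; field_simp
  have h3 : (2 * a * z * I) * sinh (π * (2 * a * z * I) / (2 * (a : ℂ))) =
      -2 * a * (z * sin (π * z)) := by
    rw [h2]; linear_combination (2 * a * z * sin (π * z)) * I_sq
  rw [sinhDen]
  rcases sq_eq_sq_iff_eq_or_eq_neg.mp h1 with h | h
  · rw [h, h3]
  · rw [h, mul_neg, neg_div, sinh_neg, neg_mul_neg, h3]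

lemma sinhDen_eq_sqrtSin {a : ℝ} (ha : a ≠ 0) (w : ℂ) :
    sinhDen a w = -2 * a * sqrtSin ((a - w) / (4 * a)) := by
  have ha' : (a : ℂ) ≠ 0 := by exact_mod_cast ha
  rw [← cpow_half_sq ((a - w) / (4 * a)), sqrtSin_sq]
  refine sinhDen_eq ha ?_
  rw [cpow_half_sq]; field_simp; ring

lemma hasDerivAt_sinhDen {a : ℝ} (ha : a ≠ 0) {w u : ℂ} (h : w = a - 4 * a * u) :
    HasDerivAt (sinhDen a) (deriv sqrtSin u / 2) w := by
  have ha' : (a : ℂ) ≠ 0 := by exact_mod_cast ha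
  have hu : (a - w) / (4 * a) = u := by rw [h]; field_simp; ring
  have h1 := (differentiable_sqrtSin u).hasDerivAt
  rw [← hu] at h1
  have h2 := (HasDerivAt.comp w h1 (((hasDerivAt_id w).const_sub (a : ℂ)).div_const (4 * a))).const_mul
    (-2 * (a : ℂ))
  have h3 : sinhDen a = fun w ↦ -2 * (a : ℂ) * sqrtSin ((a - w) / (4 * a)) :=
    funext (sinhDen_eq_sqrtSin ha)
  rw [h3]
  have e : -2 * (a : ℂ) * (deriv sqrtSin ((a - w) / (4 * a)) * (-1 / (4 * a))) =
      deriv sqrtSin u / 2 := by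
    rw [hu]
    field_simp
    ring
  rw [e] at h2
  exact h2

lemma differentiable_sinhDen {a : ℝ} (ha : a ≠ 0) : Differentiable ℂ (sinhDen a) := by
  intro w
  have ha' : (a : ℂ) ≠ 0 := by exact_mod_cast ha
  exact (hasDerivAt_sinhDen ha (w := w) (u := (a - w) / (4 * a))
    (by field_simp; ring)).differentiableAt

/-- The zeros of `sinhDen a` are the points `a - 4 a m ^ 2`. -/
lemma sinhDen_eq_zero {a : ℝ} (ha : a ≠ 0) {w : ℂ} (h : sinhDen a w = 0) :
    ∃ m : ℕ, w = a - 4 * a * (m : ℂ) ^ 2 := by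
  have ha' : (a : ℂ) ≠ 0 := by exact_mod_cast ha
  obtain ⟨z, hz⟩ : ∃ z : ℂ, w = a - 4 * a * z ^ 2 :=
    ⟨((a - w) / (4 * a)) ^ ((1 : ℂ) / 2), by rw [cpow_half_sq]; field_simp; ring⟩
  rw [sinhDen_eq ha hz] at h
  have h1 : z * sin (π * z) = 0 := by
    refine (mul_eq_zero.mp h).resolve_left ?_
    simpa using ha
  rcases mul_eq_zero.mp h1 with h2 | h2
  · exact ⟨0, by rw [hz, h2]; simp⟩
  · obtain ⟨k, hk⟩ := sin_eq_zero_iff.mp h2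
    have hpi : (π : ℂ) ≠ 0 := by exact_mod_cast Real.pi_ne_zero
    have hzk : z = k := by
      rw [mul_comm] at hk; exact mul_right_cancel₀ hpi hk
    refine ⟨k.natAbs, ?_⟩
    rw [hz, hzk]
    have : ((k.natAbs : ℤ) : ℂ) ^ 2 = (k : ℂ) ^ 2 := by
      exact_mod_cast congrArg (Int.cast : ℤ → ℂ) (Int.natAbs_sq k)
    rw [← this]; simp

lemma sinhDen_pole {a : ℝ} (ha : a ≠ 0) (m : ℕ) : sinhDen a (a - 4 * a * (m : ℂ) ^ 2) = 0 := by
  rw [sinhDen_eq ha rfl, mul_comm (π : ℂ), sin_nat_mul_pi]; simp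

lemma normSq_sin (x y : ℝ) :
    ‖sin (x + y * I)‖ ^ 2 = Real.sin x ^ 2 + Real.sinh y ^ 2 := by
  rw [sin_add_mul_I, ← normSq_eq_norm_sq, normSq_apply]
  simp [← ofReal_sin, ← ofReal_cos, ← ofReal_sinh, ← ofReal_cosh]
  have h1 := Real.sin_sq_add_cos_sq x
  have h2 := Real.cosh_sq y
  nlinarith

lemma sinh_abs_im_le_norm_sin (s : ℂ) : Real.sinh |s.im| ≤ ‖sin s‖ := by
  have h := normSq_sin s.re s.im
  rw [re_add_im] at h
  refine le_of_abs_le ((abs_le_of_sq_le_sq ?_ (norm_nonneg _)))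
  rw [h, ← Real.abs_sinh, sq_abs]
  nlinarith [sq_nonneg (Real.sin s.re)]

lemma abs_sin_re_le_norm_sin (s : ℂ) : |Real.sin s.re| ≤ ‖sin s‖ := by
  have h := normSq_sin s.re s.im
  rw [re_add_im] at h
  refine le_of_abs_le ((abs_le_of_sq_le_sq ?_ (norm_nonneg _)))
  rw [h, sq_abs]
  nlinarith [sq_nonneg (Real.sinh s.im)]

/-! ### The residue theorem for simple poles -/

/-- A function with isolated singularities at which `(z - p) * f z → 0` has vanishing circle
integral, because these singularities are removable. -/
lemma circleIntegral_eq_zero_of_tendsto {f : ℂ → ℂ} {c : ℂ} {R : ℝ} (hR : 0 < R) (P : Finset ℂ)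
    (hP : ∀ p ∈ P, p ∈ Metric.ball c R)
    (hf : ∀ z ∈ Metric.closedBall c R, z ∉ P → DifferentiableAt ℂ f z)
    (hlim : ∀ p ∈ P, Tendsto (fun z ↦ (z - p) * f z) (𝓝[≠] p) (𝓝 0)) :
    (∮ z in C(c, R), f z) = 0 := by
  classical
  set g : ℂ → ℂ := fun z ↦ if z ∈ P then limUnder (𝓝[≠] z) f else f z with hg
  have hgd : ∀ z ∈ Metric.closedBall c R, DifferentiableAt ℂ g z := by
    have hfg : ∀ z, z ∉ P → g =ᶠ[𝓝 z] f := by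
      intro z hz
      filter_upwards [P.finite_toSet.isClosed.isOpen_compl.mem_nhds (by simpa using hz)] with u hu
      have : u ∉ P := by simpa using hu
      simp [hg, this]
    intro z hz
    by_cases hzP : z ∈ P
    · have hev : ∀ᶠ u in 𝓝[≠] z, u ∈ Metric.ball c R ∧ u ∉ P := by
        have h1 : ∀ᶠ u in 𝓝[≠] z, u ∈ Metric.ball c R :=
          nhdsWithin_le_nhds (Metric.isOpen_ball.mem_nhds (hP z hzP))
        have h2 : ∀ᶠ u in 𝓝[≠] z, u ∈ ((P.erase z : Finset ℂ) : Set ℂ)ᶜ :=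
          nhdsWithin_le_nhds ((P.erase z).finite_toSet.isClosed.isOpen_compl.mem_nhds (by simp))
        filter_upwards [h1, h2, self_mem_nhdsWithin] with u hu1 hu2 hu3
        refine ⟨hu1, fun h ↦ hu2 ?_⟩
        exact Finset.mem_coe.mpr (Finset.mem_erase.mpr ⟨hu3, h⟩)
      have hfd : ∀ᶠ u in 𝓝[≠] z, DifferentiableAt ℂ f u := by
        filter_upwards [hev] with u hu
        exact hf u (Metric.ball_subset_closedBall hu.1) hu.2
      have ho : (fun u ↦ f u - f z) =o[𝓝[≠] z] fun u ↦ (u - z)⁻¹ := by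
        refine Asymptotics.isLittleO_of_tendsto' ?_ ?_
        · filter_upwards [self_mem_nhdsWithin] with u hu h
          exact absurd (inv_eq_zero.mp h) (sub_ne_zero.mpr hu)
        · have h1 : Tendsto (fun u ↦ (u - z) * f z) (𝓝[≠] z) (𝓝 0) := by
            have h2 : ContinuousAt (fun u ↦ (u - z) * f z) z := by fun_prop
            have h3 := h2.tendsto
            simp only [sub_self, zero_mul] at h3
            exact h3.mono_left nhdsWithin_le_nhds
          have h2 := (hlim z hzP).sub h1
          rw [sub_zero] at h2
          refine h2.congr (fun u ↦ ?_)
          rw [div_inv_eq_mul]; ring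
      have ht := tendsto_limUnder_of_differentiable_on_punctured_nhds_of_isLittleO hfd ho
      have hgz : g z = limUnder (𝓝[≠] z) f := by simp [hg, hzP]
      refine (analyticAt_of_differentiable_on_punctured_nhds_of_continuousAt ?_ ?_).differentiableAt
      · filter_upwards [hfd, hev] with u hu1 hu2
        exact hu1.congr_of_eventuallyEq (hfg u hu2.2)
      · rw [continuousAt_iff_punctured_nhds, hgz]
        refine ht.congr' ?_
        filter_upwards [hev] with u hu
        simp [hg, hu.2]
    · exact (hf z hz hzP).congr_of_eventuallyEq (hfg z hzP)
  have heq : (∮ z in C(c, R), f z) = ∮ z in C(c, R), g z := by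
    refine circleIntegral.integral_congr hR.le (fun z hz ↦ ?_)
    have : z ∉ P := fun h ↦ by
      have h1 := hP z h
      rw [Metric.mem_ball] at h1
      rw [Metric.mem_sphere] at hz
      linarith
    simp [hg, this]
  rw [heq]
  exact Complex.circleIntegral_eq_zero_of_differentiable_on_off_countable hR.le
    Set.countable_empty (fun z hz ↦ (hgd z hz).continuousAt.continuousWithinAt)
    (fun z hz ↦ hgd z (Metric.ball_subset_closedBall hz.1))

/-- The residue theorem for a function with finitely many singularities in a disc, all of them at most
simple poles; `r p` is the residue at `p`. -/
lemma circleIntegral_eq_sum {f : ℂ → ℂ} {c : ℂ} {R : ℝ} (hR : 0 < R) (P : Finset ℂ) (r : ℂ → ℂ)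
    (hP : ∀ p ∈ P, p ∈ Metric.ball c R)
    (hf : ∀ z ∈ Metric.closedBall c R, z ∉ P → DifferentiableAt ℂ f z)
    (hlim : ∀ p ∈ P, Tendsto (fun z ↦ (z - p) * f z) (𝓝[≠] p) (𝓝 (r p))) :
    (∮ z in C(c, R), f z) = 2 * π * I * ∑ p ∈ P, r p := by
  classical
  have hne : ∀ z ∈ Metric.sphere c R, z ∉ P := fun z hz h ↦ by
    have h1 := hP z h
    rw [Metric.mem_ball] at h1
    rw [Metric.mem_sphere] at hz
    linarith
  have hd : ∀ z, z ∉ P → DifferentiableAt ℂ (fun z ↦ ∑ p ∈ P, r p * (z - p)⁻¹) z := by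
    intro z hz
    refine DifferentiableAt.fun_sum (fun p hp ↦ ?_)
    refine DifferentiableAt.const_mul (DifferentiableAt.fun_inv (by fun_prop) ?_) _
    exact sub_ne_zero.mpr (fun h ↦ hz (h ▸ hp))
  have h0 := circleIntegral_eq_zero_of_tendsto (f := fun z ↦ f z - ∑ p ∈ P, r p * (z - p)⁻¹)
    hR P hP (fun z hz hzP ↦ (hf z hz hzP).sub (hd z hzP)) (by
      intro q hq
      have h1 : Tendsto (fun z ↦ (z - q) * ∑ p ∈ P, r p * (z - p)⁻¹) (𝓝[≠] q) (𝓝 (r q)) := by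
        have h2 : Tendsto (fun z ↦ r q + (z - q) * ∑ p ∈ P.erase q, r p * (z - p)⁻¹) (𝓝[≠] q)
            (𝓝 (r q)) := by
          have h3 : ContinuousAt (fun z ↦ r q + (z - q) * ∑ p ∈ P.erase q, r p * (z - p)⁻¹) q := by
            have h4 : ContinuousAt (fun z ↦ ∑ p ∈ P.erase q, r p * (z - p)⁻¹) q := by
              refine tendsto_finsetSum _ (fun p hp ↦ ?_)
              have : q - p ≠ 0 := sub_ne_zero.mpr (Finset.ne_of_mem_erase hp).symm
              have h5 : ContinuousAt (fun z ↦ r p * (z - p)⁻¹) q :=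
                ContinuousAt.mul (by fun_prop) (ContinuousAt.inv₀ (by fun_prop) this)
              exact h5
            fun_prop
          have := h3.tendsto
          simp only [sub_self, zero_mul, add_zero] at this
          exact this.mono_left nhdsWithin_le_nhds
        refine h2.congr' ?_
        filter_upwards [self_mem_nhdsWithin] with z hz
        have hz' : z - q ≠ 0 := sub_ne_zero.mpr hz
        rw [← Finset.add_sum_erase P _ hq, mul_add]
        congr 1
        field_simp
      have := (hlim q hq).sub h1
      rw [sub_self] at this
      refine this.congr (fun z ↦ by ring))
  have hci : CircleIntegrable f c R := by
    refine ContinuousOn.circleIntegrable hR.le (fun z hz ↦ ?_)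
    exact (hf z (Metric.sphere_subset_closedBall hz) (hne z hz)).continuousAt.continuousWithinAt
  have hci2 : ∀ p ∈ P, CircleIntegrable (fun z ↦ r p * (z - p)⁻¹) c R := by
    intro p hp
    refine ContinuousOn.circleIntegrable hR.le (fun z hz ↦ ?_)
    have : z - p ≠ 0 := sub_ne_zero.mpr (fun h ↦ hne z hz (h ▸ hp))
    exact ContinuousAt.continuousWithinAt
      (ContinuousAt.mul (by fun_prop) (ContinuousAt.inv₀ (by fun_prop) this))
  have hci3 : CircleIntegrable (fun z ↦ ∑ p ∈ P, r p * (z - p)⁻¹) c R := by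
    refine ContinuousOn.circleIntegrable hR.le (fun z hz ↦ ?_)
    exact (hd z (hne z hz)).continuousAt.continuousWithinAt
  rw [circleIntegral.integral_sub hci hci3, sub_eq_zero] at h0
  rw [h0, circleIntegral.integral_fun_sum hci2, Finset.mul_sum]
  refine Finset.sum_congr rfl (fun p hp ↦ ?_)
  rw [circleIntegral.integral_const_mul, circleIntegral.integral_sub_inv_of_mem_ball (hP p hp)]
  ring

/-! ### The integrand and its residues -/

/-- The function `w ζ'(w) / (ζ(w) S(w))`, with `S = sinhDen a`, whose residues produce all terms of
the identity. -/
noncomputable def integrand (a : ℝ) (w : ℂ) : ℂ :=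
  w * (deriv riemannZeta w / riemannZeta w) / sinhDen a w

lemma differentiableAt_deriv_zeta {w : ℂ} (h1 : w ≠ 1) :
    DifferentiableAt ℂ (deriv riemannZeta) w := by
  have h2 : DifferentiableOn ℂ riemannZeta {1}ᶜ := fun z hz ↦
    (differentiableAt_riemannZeta hz).differentiableWithinAt
  exact (h2.deriv isOpen_compl_singleton).differentiableAt (isOpen_compl_singleton.mem_nhds h1)

lemma differentiableAt_integrand {a : ℝ} (ha : a ≠ 0) {w : ℂ} (h1 : w ≠ 1)
    (hz : riemannZeta w ≠ 0) (hs : sinhDen a w ≠ 0) : DifferentiableAt ℂ (integrand a) w := by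
  have h3 := differentiableAt_deriv_zeta h1
  have h4 := differentiableAt_riemannZeta h1
  have h5 := differentiable_sinhDen ha w
  exact ((differentiableAt_id.mul (h3.fun_div h4 hz)).fun_div h5 hs)

lemma tendsto_sub_div {f : ℂ → ℂ} {p c : ℂ} (hf : HasDerivAt f c p) (h0 : f p = 0) (hc : c ≠ 0) :
    Tendsto (fun z ↦ (z - p) / f z) (𝓝[≠] p) (𝓝 c⁻¹) := by
  have h1 := hf.tendsto_slope.inv₀ hc
  refine h1.congr (fun z ↦ ?_)
  rw [slope_def_field, h0, sub_zero, inv_div]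

/-- At a simple zero `ρ` of zeta the residue of the integrand is `ρ / S(ρ)`. -/
lemma residue_zero {a : ℝ} (ha : a ≠ 0) {ρ : ℂ} (h1 : ρ ≠ 1) (hz : riemannZeta ρ = 0)
    (hd : deriv riemannZeta ρ ≠ 0) (hs : sinhDen a ρ ≠ 0) :
    Tendsto (fun z ↦ (z - ρ) * integrand a z) (𝓝[≠] ρ) (𝓝 (ρ / sinhDen a ρ)) := by
  have h2 := tendsto_sub_div (differentiableAt_riemannZeta h1).hasDerivAt hz hd
  have h3 : ContinuousAt (fun z ↦ z * deriv riemannZeta z / sinhDen a z) ρ :=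
    (continuousAt_id.mul (differentiableAt_deriv_zeta h1).continuousAt).div
      (differentiable_sinhDen ha ρ).continuousAt hs
  have h4 := (h3.tendsto.mono_left nhdsWithin_le_nhds).mul h2
  have e : ρ * deriv riemannZeta ρ / sinhDen a ρ * (deriv riemannZeta ρ)⁻¹ = ρ / sinhDen a ρ := by
    field_simp
  rw [e] at h4
  refine h4.congr (fun z ↦ ?_)
  rw [integrand]; ring

/-- At a simple zero `p` of the denominator the residue is the numerator divided by `c`, the derivative. -/
lemma residue_sinhDen {a : ℝ} {p c : ℂ} (h1 : p ≠ 1) (hz : riemannZeta p ≠ 0)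
    (hs : sinhDen a p = 0) (hd : HasDerivAt (sinhDen a) c p) (hc : c ≠ 0) :
    Tendsto (fun z ↦ (z - p) * integrand a z) (𝓝[≠] p)
      (𝓝 (p * (deriv riemannZeta p / riemannZeta p) / c)) := by
  have h2 := tendsto_sub_div hd hs hc
  have h3 : ContinuousAt (fun z ↦ z * (deriv riemannZeta z / riemannZeta z)) p :=
    continuousAt_id.mul ((differentiableAt_deriv_zeta h1).continuousAt.div
      (differentiableAt_riemannZeta h1).continuousAt hz)
  have h4 := (h3.tendsto.mono_left nhdsWithin_le_nhds).mul h2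
  rw [div_eq_mul_inv _ c]
  refine h4.congr (fun z ↦ ?_)
  rw [integrand]; ring

lemma zeta_eq_zero_iff {w : ℂ} (h1 : w ≠ 1) : riemannZeta w = 0 ↔ riemannZeta₁ w = 0 := by
  rw [riemannZeta_eq_inv_sub_mul h1, mul_eq_zero]
  have : (w - 1)⁻¹ ≠ 0 := inv_ne_zero (sub_ne_zero.mpr h1)
  tauto

lemma logDeriv_zeta_eq {w : ℂ} (h1 : w ≠ 1) (hz : riemannZeta w ≠ 0) :
    deriv riemannZeta w / riemannZeta w =
      deriv riemannZeta₁ w / riemannZeta₁ w - 1 / (w - 1) := by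
  have h2 : riemannZeta₁ w ≠ 0 := fun h ↦ hz ((zeta_eq_zero_iff h1).mpr h)
  have h3 : w - 1 ≠ 0 := sub_ne_zero.mpr h1
  rw [deriv_riemannZeta_eq_neg_inv_sub_sq_mul_add h1, riemannZeta_eq_inv_sub_mul h1]
  field_simp
  ring

/-- At the pole of zeta the logarithmic derivative has residue `-1`. -/
lemma residue_one {a : ℝ} (ha : a ≠ 0) (hs : sinhDen a 1 ≠ 0) :
    Tendsto (fun z ↦ (z - 1) * integrand a z) (𝓝[≠] 1) (𝓝 (-1 / sinhDen a 1)) := by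
  have hE1 : riemannZeta₁ 1 ≠ 0 := by rw [riemannZeta₁_one]; exact one_ne_zero
  have hd := differentiable_riemannZeta₁
  have hd' : Differentiable ℂ (deriv riemannZeta₁) := by
    rw [← differentiableOn_univ] at hd ⊢
    exact hd.deriv isOpen_univ
  have h3 : ContinuousAt (fun z ↦ ((z - 1) * (deriv riemannZeta₁ z / riemannZeta₁ z) - 1)
      * (z / sinhDen a z)) 1 := by
    have h4 : ContinuousAt (fun z ↦ deriv riemannZeta₁ z / riemannZeta₁ z) 1 :=
      (hd' 1).continuousAt.div (hd 1).continuousAt hE1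
    have h5 : ContinuousAt (fun z ↦ z / sinhDen a z) 1 :=
      continuousAt_id.div (differentiable_sinhDen ha 1).continuousAt hs
    fun_prop
  have h4 := h3.tendsto.mono_left (nhdsWithin_le_nhds (s := {1}ᶜ))
  have e : ((1 - 1) * (deriv riemannZeta₁ 1 / riemannZeta₁ 1) - 1) * (1 / sinhDen a 1) =
      -1 / sinhDen a 1 := by ring
  rw [e] at h4
  refine h4.congr' ?_
  have hne : ∀ᶠ z in 𝓝[≠] (1 : ℂ), riemannZeta₁ z ≠ 0 :=
    nhdsWithin_le_nhds ((hd 1).continuousAt.eventually_ne hE1)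
  filter_upwards [hne, self_mem_nhdsWithin] with z hz hz1
  have hz1' : z ≠ 1 := hz1
  have h3 : z - 1 ≠ 0 := sub_ne_zero.mpr hz1'
  rw [integrand, logDeriv_zeta_eq hz1' (fun h ↦ hz ((zeta_eq_zero_iff hz1').mp h))]
  field_simp

lemma zeta_zero_ne_one {ρ : ℂ} (h : riemannZeta ρ = 0) : ρ ≠ 1 := by
  rintro rfl
  exact riemannZeta_one_ne_zero h

lemma deriv_ne_zero_of_zero
    (hsimple : ∀ τ : ℂ, riemannZeta τ = 0 → 0 < τ.re → τ.re < 1 → deriv riemannZeta τ ≠ 0)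
    {ρ : ℂ} (h : riemannZeta ρ = 0) : deriv riemannZeta ρ ≠ 0 := by
  rcases le_or_gt ρ.re 0 with h0 | h0
  · obtain ⟨n, rfl⟩ := riemannZeta_zero_of_re_nonpos h h0
    exact deriv_riemannZeta_trivial_ne_zero n
  · refine hsimple ρ h h0 ?_
    by_contra hcon
    exact riemannZeta_ne_zero_of_one_le_re (by linarith) h

lemma deriv_zeta₁_ne_zero_of_zero
    (hsimple : ∀ τ : ℂ, riemannZeta τ = 0 → 0 < τ.re → τ.re < 1 → deriv riemannZeta τ ≠ 0)
    {ρ : ℂ} (h : riemannZeta₁ ρ = 0) : deriv riemannZeta₁ ρ ≠ 0 := by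
  have h1 : ρ ≠ 1 := by
    rintro rfl
    rw [riemannZeta₁_one] at h
    exact one_ne_zero h
  have h2 := deriv_ne_zero_of_zero hsimple ((zeta_eq_zero_iff h1).mpr h)
  rw [deriv_riemannZeta_eq_neg_inv_sub_sq_mul_add h1, h] at h2
  intro h3
  simp [h3] at h2

lemma zeta_a_ne_zero {a : ℝ} (ha : a < 0) (heven : ∀ n : ℕ, 0 < n → a ≠ -(2 * n : ℝ)) :
    riemannZeta (a : ℂ) ≠ 0 := by
  intro h
  obtain ⟨n, hn⟩ := riemannZeta_zero_of_re_nonpos h (by simpa using ha.le)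
  refine heven (n + 1) (Nat.succ_pos n) ?_
  have : ((a : ℝ) : ℂ) = ((-(2 * ((n + 1 : ℕ) : ℝ)) : ℝ) : ℂ) := by rw [hn]; push_cast; ring
  exact_mod_cast this

/-- For `m ≥ 1` the zero `a - 4 a m ^ 2` of the denominator is a positive real number, where zeta does
not vanish. -/
lemma zeta_pole_ne_zero {a : ℝ} (ha : a < 0) (heven : ∀ n : ℕ, 0 < n → a ≠ -(2 * n : ℝ)) (m : ℕ) :
    riemannZeta ((a : ℂ) - 4 * a * (m : ℂ) ^ 2) ≠ 0 := by
  rcases Nat.eq_zero_or_pos m with rfl | hm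
  · simpa using zeta_a_ne_zero ha heven
  · have hm' : (1 : ℝ) ≤ m := by exact_mod_cast hm
    have h1 : 0 < a - 4 * a * (m : ℝ) ^ 2 := by
      have h2 : (1 : ℝ) ≤ (m : ℝ) ^ 2 := one_le_pow₀ hm'
      nlinarith
    have := zeta_ne_zero_of_pos h1
    push_cast at this
    exact this

/-- The hypothesis on `(2 k + 1) (2 k + 3)` says exactly that the denominator does not vanish at `1`. -/
lemma pole_ne_one {a : ℝ} (ha : a < 0) (hK : ∀ k : ℕ, a * (2 * k + 1) * (2 * k + 3) ≠ -1) (m : ℕ) :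
    (a : ℂ) - 4 * a * (m : ℂ) ^ 2 ≠ 1 := by
  intro h
  have h1 : a - 4 * a * (m : ℝ) ^ 2 = 1 := by exact_mod_cast h
  rcases m with _ | k
  · simp at h1; linarith
  · refine hK k ?_
    push_cast at h1
    linarith

lemma sinhDen_zero_ne {a : ℝ} (ha : a < 0) (heven : ∀ n : ℕ, 0 < n → a ≠ -(2 * n : ℝ))
    {ρ : ℂ} (h : riemannZeta ρ = 0) : sinhDen a ρ ≠ 0 := by
  intro h0
  obtain ⟨m, rfl⟩ := sinhDen_eq_zero ha.ne h0
  exact zeta_pole_ne_zero ha heven m h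

lemma sinhDen_one_ne {a : ℝ} (ha : a < 0) (hK : ∀ k : ℕ, a * (2 * k + 1) * (2 * k + 3) ≠ -1) :
    sinhDen a 1 ≠ 0 := by
  intro h0
  obtain ⟨m, hm⟩ := sinhDen_eq_zero ha.ne h0
  exact pole_ne_one ha hK m hm.symm

lemma norm_pole_sub {a : ℝ} (ha : a < 0) (m : ℕ) :
    ‖((a : ℂ) - 4 * a * (m : ℂ) ^ 2) - a‖ = 4 * (-a) * (m : ℝ) ^ 2 := by
  have : ((a : ℂ) - 4 * a * (m : ℂ) ^ 2) - a = ((4 * (-a) * (m : ℝ) ^ 2 : ℝ) : ℂ) := by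
    push_cast; ring
  rw [this, norm_real, Real.norm_of_nonneg]
  have : 0 < -a := by linarith
  positivity

/-- The derivative of `sinhDen a` at its zero `a - 4 a m ^ 2`. -/
noncomputable def poleDeriv (m : ℕ) : ℂ := if m = 0 then π / 2 else π * (-1) ^ m / 4

lemma hasDerivAt_sinhDen_pole {a : ℝ} (ha : a ≠ 0) (m : ℕ) :
    HasDerivAt (sinhDen a) (poleDeriv m) (a - 4 * a * (m : ℂ) ^ 2) := by
  have h := hasDerivAt_sinhDen ha (u := (m : ℂ) ^ 2) rfl
  have e : deriv sqrtSin ((m : ℂ) ^ 2) / 2 = poleDeriv m := by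
    rw [poleDeriv]
    split_ifs with hm
    · rw [hm]; simp [deriv_sqrtSin_zero]
    · rw [deriv_sqrtSin_nat hm]; ring
  rwa [e] at h

lemma poleDeriv_ne_zero (m : ℕ) : poleDeriv m ≠ 0 := by
  rw [poleDeriv]
  split_ifs <;> simp [Real.pi_ne_zero]

/-! ### Lower bounds for the denominator -/

lemma eventually_pow_le_sinh (A : ℝ) (n : ℕ) :
    ∀ᶠ R : ℝ in atTop, A * (1 + R) ^ n ≤ Real.sinh R := by
  have h := Real.isLittleO_pow_exp_atTop (n := n)
  have hc : 0 < 1 / (4 * (|A| + 1) * 2 ^ n) := by positivity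
  filter_upwards [h.def hc, eventually_ge_atTop 1] with R hR h1
  rw [Real.norm_of_nonneg (by positivity), Real.norm_of_nonneg (by positivity),
    one_div_mul_eq_div, le_div_iff₀ (by positivity)] at hR
  have h2 : (1 + R) ^ n ≤ 2 ^ n * R ^ n := by
    rw [← mul_pow]
    exact pow_le_pow_left₀ (by linarith) (by linarith) n
  have h3 : Real.exp R / 4 ≤ Real.sinh R := by
    rw [Real.sinh_eq]
    have h4 : Real.exp (-R) ≤ 1 := Real.exp_le_one_iff.mpr (by linarith)
    have h5 := Real.add_one_le_exp R
    linarith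
  refine le_trans ?_ h3
  have h6 : A * (1 + R) ^ n ≤ (|A| + 1) * (2 ^ n * R ^ n) :=
    mul_le_mul (by linarith [le_abs_self A]) h2 (by positivity) (by positivity)
  linarith

lemma eventually_pow_le_two_rpow (A : ℝ) (n : ℕ) {c : ℝ} (hc : 0 < c) :
    ∀ᶠ R : ℝ in atTop, A * (1 + R) ^ n ≤ (2 : ℝ) ^ (c * R ^ 2) := by
  have hl2 : 0 < Real.log 2 := Real.log_pos (by norm_num)
  filter_upwards [eventually_pow_le_sinh A n, eventually_ge_atTop 0,
    eventually_ge_atTop (1 / (Real.log 2 * c))] with R h1 h0 h2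
  refine h1.trans ?_
  have h3 : Real.sinh R ≤ Real.exp R := by
    rw [Real.sinh_eq]
    have := Real.exp_pos (-R)
    have := Real.exp_pos R
    linarith
  refine h3.trans ?_
  rw [Real.rpow_def_of_pos (by norm_num), Real.exp_le_exp]
  rw [div_le_iff₀ (by positivity)] at h2
  nlinarith

/-- Each point `w` is `a - 4 a z ^ 2` for some `z`; the data of `w` in terms of `z`. -/
lemma exists_param {a : ℝ} (ha : a < 0) (w : ℂ) : ∃ z : ℂ, w = a - 4 * a * z ^ 2 ∧
    ‖w - a‖ = 4 * (-a) * ‖z‖ ^ 2 ∧ w.re = a + 4 * (-a) * (z.re ^ 2 - z.im ^ 2) ∧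
    ‖z‖ ^ 2 = z.re ^ 2 + z.im ^ 2 ∧ ‖sinhDen a w‖ = 2 * (-a) * (‖z‖ * ‖sin (π * z)‖) := by
  have ha' : (a : ℂ) ≠ 0 := by exact_mod_cast ha.ne
  have hna : ‖(a : ℂ)‖ = -a := by rw [norm_real, Real.norm_of_nonpos ha.le]
  refine ⟨((a - w) / (4 * a)) ^ ((1 : ℂ) / 2), ?_⟩
  have hw : w = a - 4 * a * (((a - w) / (4 * a)) ^ ((1 : ℂ) / 2)) ^ 2 := by
    rw [cpow_half_sq]; field_simp; ring
  set z := ((a - w) / (4 * a)) ^ ((1 : ℂ) / 2) with hz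
  clear_value z
  refine ⟨hw, ?_, ?_, ?_, ?_⟩
  · have : w - a = -(4 * a * z ^ 2) := by rw [hw]; ring
    rw [this, norm_neg, norm_mul, norm_mul, hna, norm_pow]
    norm_num
  · have e : (z ^ 2).re = z.re ^ 2 - z.im ^ 2 := by simp [sq]
    have e2 : (4 * (a : ℂ) * z ^ 2).re = 4 * a * (z ^ 2).re := by
      rw [show 4 * (a : ℂ) = ((4 * a : ℝ) : ℂ) by push_cast; ring, re_ofReal_mul]
    rw [hw, sub_re, e2, e, ofReal_re]
    ring
  · rw [← normSq_eq_norm_sq, normSq_apply]; ring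
  · rw [sinhDen_eq ha.ne hw, norm_mul, norm_mul, norm_mul, hna]
    norm_num

/-- Away from the real axis the sine grows exponentially. -/
lemma sinh_le_norm_sin {z : ℂ} (h : ‖z‖ ^ 2 / 4 ≤ z.im ^ 2) :
    Real.sinh ‖z‖ ≤ ‖sin (π * z)‖ := by
  refine le_trans ?_ (sinh_abs_im_le_norm_sin _)
  rw [Real.sinh_le_sinh]
  have h1 : ((π : ℂ) * z).im = π * z.im := by simp
  rw [h1, abs_mul, abs_of_pos Real.pi_pos]
  have h2 : ‖z‖ / 2 ≤ |z.im| := by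
    refine abs_le_of_sq_le_sq ?_ (abs_nonneg _) |> le_of_abs_le
    rw [sq_abs]
    linarith
  nlinarith [Real.pi_gt_three, norm_nonneg z]

lemma half_le_abs_sin {x : ℝ} {j : ℕ} (h1 : (j : ℝ) + 1 / 4 ≤ |x|) (h2 : |x| ≤ j + 3 / 4) :
    1 / 2 ≤ |Real.sin (π * x)| := by
  have h3 : |Real.sin (π * x)| = |Real.sin (π * |x| - j * π)| := by
    rw [Real.sin_sub_nat_mul_pi, abs_mul, abs_pow, abs_neg, abs_one, one_pow, one_mul]
    rcases abs_choice x with h | h <;> rw [h]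
    rw [mul_neg, Real.sin_neg, abs_neg]
  have hpi := Real.pi_pos
  set t := |x| - j with ht
  have h4 : π * |x| - j * π = π * t := by rw [ht]; ring
  rw [h3, h4]
  have h5 : 1 / 2 ≤ Real.sin (π * t) := by
    rcases le_total t (1 / 2) with h | h
    · have := Real.mul_le_sin (x := π * t) (by nlinarith) (by nlinarith)
      have e : 2 / π * (π * t) = 2 * t := by field_simp
      linarith
    · have := Real.mul_le_sin (x := π * (1 - t)) (by nlinarith) (by nlinarith)
      have e : 2 / π * (π * (1 - t)) = 2 * (1 - t) := by field_simp
      have e2 : Real.sin (π * (1 - t)) = Real.sin (π * t) := by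
        rw [← Real.sin_pi_sub]; congr 1; ring
      linarith
  exact h5.trans (le_abs_self _)

/-- `sin (π z)` is bounded below when `‖z‖` stays away from the integers: either `|im z| ≥ 1`, or
`|re z|` is so close to `‖z‖` that it stays away from the integers as well. -/
lemma half_le_norm_sin {z : ℂ} {j : ℕ} (hj : 12 ≤ j) (h1 : (j : ℝ) + 1 / 3 ≤ ‖z‖)
    (h2 : ‖z‖ ≤ j + 2 / 3) : 1 / 2 ≤ ‖sin (π * z)‖ := by
  have hj' : (12 : ℝ) ≤ j := by exact_mod_cast hj
  rcases le_or_gt 1 |z.im| with h | h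
  · refine le_trans ?_ (sinh_abs_im_le_norm_sin _)
    have h3 : ((π : ℂ) * z).im = π * z.im := by simp
    rw [h3, abs_mul, abs_of_pos Real.pi_pos]
    have h4 : π * |z.im| ≤ Real.sinh (π * |z.im|) :=
      Real.self_le_sinh_iff.mpr (by positivity)
    nlinarith [Real.pi_gt_three]
  · refine le_trans ?_ (abs_sin_re_le_norm_sin _)
    have h3 : ((π : ℂ) * z).re = π * z.re := by simp
    rw [h3]
    refine half_le_abs_sin (j := j) ?_ ((abs_re_le_norm z).trans (by linarith))
    by_contra hcon
    push Not at hcon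
    have h5 : ‖z‖ ^ 2 = z.re ^ 2 + z.im ^ 2 := by
      rw [← normSq_eq_norm_sq, normSq_apply]; ring
    rw [← sq_abs z.re, ← sq_abs z.im] at h5
    have h6 : |z.im| ^ 2 < 1 := by nlinarith [abs_nonneg z.im]
    nlinarith [abs_nonneg z.re]

/-! ### Circles on which the integrand is small -/

lemma norm_zeta₁_shift_le {a : ℝ} : ∃ C : ℝ, 0 < C ∧ ∀ w : ℂ,
    ‖riemannZeta₁ (a + w)‖ ≤ Real.exp (C * (1 + ‖w‖) ^ 2) := by
  obtain ⟨C, hC, h⟩ := norm_zeta₁_le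
  refine ⟨C * (1 + |a|) ^ 2, by positivity, fun w ↦ (h _).trans ?_⟩
  rw [Real.exp_le_exp, mul_assoc, ← mul_pow]
  have h1 : ‖(a : ℂ) + w‖ ≤ |a| + ‖w‖ := by
    refine (norm_add_le _ _).trans ?_
    rw [norm_real, Real.norm_eq_abs]
  have h2 := mul_nonneg (abs_nonneg a) (norm_nonneg w)
  gcongr
  nlinarith

set_option maxHeartbeats 400000 in
/-- There are circles around `a`, with radii between the distances of consecutive zeros of the
denominator, on which the integrand is `o(1 / r)`. In the coordinate `z`, if `|im z| ≥ ‖z‖ / 2` then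
the denominator grows exponentially in `‖z‖` and beats the polynomial bound for `ζ'/ζ`; otherwise
`w` lies far in the right half-plane, where `ζ'/ζ` is exponentially small and the denominator is
bounded below. -/
lemma exists_circle {a : ℝ} (ha : a < 0) (heven : ∀ n : ℕ, 0 < n → a ≠ -(2 * n : ℝ))
    (hsimple : ∀ τ : ℂ, riemannZeta τ = 0 → 0 < τ.re → τ.re < 1 → deriv riemannZeta τ ≠ 0) :
    ∃ J : ℕ, 1 ≤ J ∧ ∀ j ≥ J, ∃ r : ℝ, 4 * (-a) * ((j : ℝ) + 1 / 3) ^ 2 ≤ r ∧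
      r ≤ 4 * (-a) * ((j : ℝ) + 2 / 3) ^ 2 ∧ 2 - a ≤ r ∧
      ∀ w : ℂ, ‖w - a‖ = r → w ≠ 1 ∧ riemannZeta w ≠ 0 ∧ ‖integrand a w‖ ≤ 1 / (r * j) := by
  obtain ⟨C₀, hC₀, hb⟩ := norm_zeta₁_shift_le (a := a)
  have ha1 : (a : ℂ) ≠ 1 := by
    intro h
    have : a = 1 := by exact_mod_cast h
    linarith
  have hderiv : ∀ w : ℂ, deriv (fun w ↦ riemannZeta₁ (a + w)) w = deriv riemannZeta₁ (a + w) :=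
    fun w ↦ deriv_comp_const_add _ _ _
  obtain ⟨D, hD, hgood⟩ := exists_good_radius (F := fun w ↦ riemannZeta₁ (a + w))
    (differentiable_riemannZeta₁.comp (by fun_prop))
    (by
      simp only [add_zero]
      exact fun h ↦ zeta_a_ne_zero ha heven ((zeta_eq_zero_iff ha1).mpr h)) hC₀ hb
    (fun w hw ↦ by rw [hderiv]; exact deriv_zeta₁_ne_zero_of_zero hsimple hw)
  obtain ⟨C, hC, hlog⟩ := norm_logDeriv_zeta_le
  obtain ⟨b, rfl⟩ : ∃ b : ℝ, a = -b := ⟨-a, by ring⟩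
  have hb0 : 0 < b := by linarith
  rw [neg_neg]
  obtain ⟨R₁, hR₁⟩ := eventually_atTop.mp
    (eventually_pow_le_sinh (8 * b * (D * (1 + 4 * b) ^ 4 + 1)) 12)
  obtain ⟨R₂, hR₂⟩ := eventually_atTop.mp
    (eventually_pow_le_two_rpow (16 * b * C * (2 : ℝ) ^ b) 4 (c := 2 * b) (by positivity))
  obtain ⟨J, hJ⟩ := exists_nat_ge (max (max R₁ R₂) ((b + 2) / b))
  refine ⟨max J 12, le_trans (by norm_num) (le_max_right _ _), fun j hj ↦ ?_⟩
  have hj12 : 12 ≤ j := (le_max_right _ _).trans hj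
  have hj12' : (12 : ℝ) ≤ j := by exact_mod_cast hj12
  have hJj : (J : ℝ) ≤ j := by exact_mod_cast (le_max_left _ _).trans hj
  have hjR₁ : R₁ ≤ j := ((le_max_left _ _).trans (le_max_left _ _)).trans (hJ.trans hJj)
  have hjR₂ : R₂ ≤ j := ((le_max_right _ _).trans (le_max_left _ _)).trans (hJ.trans hJj)
  have hbj : b + 2 ≤ b * j := by
    have := (le_max_right _ _).trans (hJ.trans hJj)
    rw [div_le_iff₀ hb0] at this
    linarith
  have hα : b + 2 ≤ 4 * b * ((j : ℝ) + 1 / 3) ^ 2 := by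
    have h1 : (j : ℝ) ≤ ((j : ℝ) + 1 / 3) ^ 2 := by nlinarith only [hj12']
    have h2 := mul_le_mul_of_nonneg_left h1 hb0.le
    linarith
  obtain ⟨r, ⟨hr1, hr2⟩, hr⟩ := hgood (4 * b * ((j : ℝ) + 1 / 3) ^ 2)
    (4 * b * ((j : ℝ) + 2 / 3) ^ 2) (by linarith) (by nlinarith only [hbj, hb0])
  refine ⟨r, hr1, hr2, by linarith, fun w hw ↦ ?_⟩
  have hr0 : 0 < r := by linarith
  -- the circle stays at distance at least one from the pole of zeta
  have hw1 : 1 ≤ ‖w - 1‖ := by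
    have h1 : ‖w - ((-b : ℝ) : ℂ)‖ ≤ ‖w - 1‖ + ‖(1 : ℂ) - ((-b : ℝ) : ℂ)‖ :=
      norm_sub_le_norm_sub_add_norm_sub _ _ _
    have h2 : ‖(1 : ℂ) - ((-b : ℝ) : ℂ)‖ = 1 + b := by
      have : (1 : ℂ) - ((-b : ℝ) : ℂ) = ((1 + b : ℝ) : ℂ) := by push_cast; ring
      rw [this, norm_real, Real.norm_of_nonneg (by linarith)]
    linarith
  have hwne : w ≠ 1 := by
    rintro rfl
    simp at hw1
    linarith
  obtain ⟨hF, hFlog⟩ := hr (w - ((-b : ℝ) : ℂ)) hw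
  rw [hderiv] at hFlog
  simp only [add_sub_cancel] at hF hFlog
  have hζ : riemannZeta w ≠ 0 := fun h ↦ hF ((zeta_eq_zero_iff hwne).mp h)
  refine ⟨hwne, hζ, ?_⟩
  obtain ⟨z, -, hzn, hzre, hzsq, hzS⟩ := exists_param ha w
  rw [neg_neg] at hzn hzS hzre
  set R := ‖z‖ with hR
  have hR0 : 0 ≤ R := norm_nonneg z
  have hrR : r = 4 * b * R ^ 2 := by rw [← hw, hzn]
  have hRlo : (j : ℝ) + 1 / 3 ≤ R := by
    refine le_of_abs_le (abs_le_of_sq_le_sq ?_ hR0)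
    rw [hrR] at hr1
    exact le_of_mul_le_mul_left hr1 (by positivity)
  have hRhi : R ≤ (j : ℝ) + 2 / 3 := by
    refine le_of_abs_le (abs_le_of_sq_le_sq ?_ (by positivity))
    rw [hrR] at hr2
    exact le_of_mul_le_mul_left hr2 (by positivity)
  have hwn : ‖w‖ ≤ 4 * b * (1 + R) ^ 2 := by
    have h1 := norm_le_norm_sub_add w ((-b : ℝ) : ℂ)
    have h2 : ‖((-b : ℝ) : ℂ)‖ = b := by
      rw [norm_real, Real.norm_eq_abs, abs_neg, abs_of_pos hb0]
    rw [hw, hrR, h2] at h1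
    nlinarith only [h1, hb0, mul_nonneg hb0.le hR0]
  have hr4 : r ≤ 4 * b * (1 + R) ^ 2 := by
    rw [hrR]
    nlinarith only [hb0, mul_nonneg hb0.le hR0]
  obtain ⟨L, hL⟩ : ∃ L, ‖deriv riemannZeta w / riemannZeta w‖ = L := ⟨_, rfl⟩
  have hL0 : 0 ≤ L := hL ▸ norm_nonneg _
  have hwr : ‖w‖ * r ≤ 16 * b ^ 2 * (1 + R) ^ 4 := by
    calc ‖w‖ * r ≤ (4 * b * (1 + R) ^ 2) * (4 * b * (1 + R) ^ 2) :=
          mul_le_mul hwn hr4 hr0.le (by positivity)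
      _ = _ := by ring
  -- it suffices to beat the numerator by `s`, where `R * s` bounds the denominator from below
  suffices h : ∃ s : ℝ, 0 < s ∧ R * s ≤ ‖sinhDen (-b) w‖ ∧ ‖w‖ * r * L ≤ s by
    obtain ⟨s, hs0, hs1, hs2⟩ := h
    have hjpos : (0 : ℝ) < j := by linarith
    have hjs : j * s ≤ ‖sinhDen (-b) w‖ :=
      (mul_le_mul_of_nonneg_right (by linarith) hs0.le).trans hs1
    rw [integrand, norm_div, norm_mul, hL, div_le_div_iff₀ (lt_of_lt_of_le (by positivity) hjs)
      (by positivity)]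
    have h1 := mul_le_mul_of_nonneg_right hs2 hjpos.le
    linarith
  rcases le_or_gt (R ^ 2 / 4) (z.im ^ 2) with him | him
  · refine ⟨2 * b * Real.sinh R, ?_, ?_, ?_⟩
    · have : 0 < Real.sinh R := Real.sinh_pos_iff.mpr (by linarith)
      positivity
    · rw [hzS]
      have := sinh_le_norm_sin him
      have h2 : 2 * b * (R * Real.sinh R) ≤ 2 * b * (R * ‖sin (π * z)‖) := by gcongr
      linarith
    · have hLle : L ≤ (D * (1 + 4 * b) ^ 4 + 1) * (1 + R) ^ 8 := by
        rw [← hL, logDeriv_zeta_eq hwne hζ]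
        refine (norm_sub_le _ _).trans ?_
        have h1 : ‖1 / (w - 1)‖ ≤ 1 := by
          rw [norm_div, norm_one]
          exact div_le_one_of_le₀ hw1 (norm_nonneg _)
        have h2 : 1 + 4 * b * ((j : ℝ) + 2 / 3) ^ 2 ≤ (1 + 4 * b) * (1 + R) ^ 2 := by
          have h3 : ((j : ℝ) + 2 / 3) ^ 2 ≤ (1 + R) ^ 2 :=
            pow_le_pow_left₀ (by linarith) (by linarith) 2
          have h4 : (1 : ℝ) ≤ (1 + R) ^ 2 := one_le_pow₀ (by linarith)
          have h5 := mul_le_mul_of_nonneg_left h3 hb0.le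
          linarith
        have h5 : (1 + 4 * b * ((j : ℝ) + 2 / 3) ^ 2) ^ 4 ≤ ((1 + 4 * b) * (1 + R) ^ 2) ^ 4 := by
          gcongr
        have h6 : (1 : ℝ) ≤ (1 + R) ^ 8 := one_le_pow₀ (by linarith)
        calc _ ≤ D * (1 + 4 * b * ((j : ℝ) + 2 / 3) ^ 2) ^ 4 + 1 := add_le_add hFlog h1
          _ ≤ D * ((1 + 4 * b) * (1 + R) ^ 2) ^ 4 + (1 + R) ^ 8 := by gcongr
          _ = _ := by ring
      calc ‖w‖ * r * L ≤ (16 * b ^ 2 * (1 + R) ^ 4) *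
            ((D * (1 + 4 * b) ^ 4 + 1) * (1 + R) ^ 8) := mul_le_mul hwr hLle hL0 (by positivity)
        _ = 2 * b * (8 * b * (D * (1 + 4 * b) ^ 4 + 1) * (1 + R) ^ 12) := by ring
        _ ≤ 2 * b * Real.sinh R := by
          have := hR₁ R (by linarith)
          gcongr
  · refine ⟨b, hb0, ?_, ?_⟩
    · rw [hzS]
      have := half_le_norm_sin hj12 hRlo hRhi
      have h2 : 2 * b * (R * (1 / 2)) ≤ 2 * b * (R * ‖sin (π * z)‖) := by gcongr
      linarith
    · have hre : -b + 2 * b * R ^ 2 ≤ w.re := by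
        rw [hzre]
        nlinarith only [him, hzsq, hb0]
      have hRj : (j : ℝ) ≤ R ^ 2 := by nlinarith only [hRlo, hj12']
      have hre2 : 2 ≤ w.re := by nlinarith only [hre, hRj, hbj, hb0]
      have h1 := hlog w hre2
      rw [hL] at h1
      have h2 : (2 : ℝ) ^ (-w.re) ≤ (2 : ℝ) ^ b / (2 : ℝ) ^ (2 * b * R ^ 2) := by
        rw [← Real.rpow_sub (by norm_num)]
        exact Real.rpow_le_rpow_of_exponent_le (by norm_num) (by linarith)
      have h3 := hR₂ R (by linarith)
      have hpos : (0 : ℝ) < (2 : ℝ) ^ (2 * b * R ^ 2) := by positivity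
      calc ‖w‖ * r * L ≤ (16 * b ^ 2 * (1 + R) ^ 4) *
            (C * ((2 : ℝ) ^ b / (2 : ℝ) ^ (2 * b * R ^ 2))) :=
          mul_le_mul hwr (h1.trans (by gcongr)) hL0 (by positivity)
        _ = b * ((16 * b * C * (2 : ℝ) ^ b * (1 + R) ^ 4) / (2 : ℝ) ^ (2 * b * R ^ 2)) := by ring
        _ ≤ b * 1 := by
          gcongr
          exact div_le_one_of_le₀ h3 hpos.le
        _ = b := mul_one b

/-! ### Convergence of the sums -/

/-- A set of points with at most quadratic counting function is thin enough for the fourth power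
of the inverse distance to be summable. -/
lemma summable_inv_pow_of_card_le {Z : Set ℂ} {c : ℂ} {D : ℝ} (hD : 0 < D)
    (hcard : ∀ r : ℝ, 1 ≤ r → ∀ A : Finset ℂ, (∀ ρ ∈ A, ρ ∈ Z ∧ ‖ρ - c‖ ≤ r) →
      (A.card : ℝ) ≤ D * (1 + r) ^ 2) :
    Summable (fun ρ : Z ↦ 1 / (1 + ‖(ρ : ℂ) - c‖) ^ 4) := by
  classical
  have hs : Summable (fun n : ℕ ↦ 4 * D * (1 / ((n : ℝ) + 1) ^ 2)) := by
    refine Summable.mul_left _ ?_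
    have := (summable_nat_add_iff 1).mpr (Real.summable_one_div_nat_pow.mpr (by norm_num : 1 < 2))
    simpa using this
  refine summable_of_sum_le (c := ∑' n : ℕ, 4 * D * (1 / ((n : ℝ) + 1) ^ 2))
    (fun ρ ↦ by positivity) (fun u ↦ ?_)
  set g : Z → ℕ := fun ρ ↦ ⌊‖(ρ : ℂ) - c‖⌋₊ with hg
  rw [← Finset.sum_fiberwise_of_maps_to (s := u) (t := u.image g) (g := g)
    (fun x hx ↦ Finset.mem_image_of_mem g hx)]
  refine le_trans (Finset.sum_le_sum (fun n _ ↦ ?_))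
    (hs.sum_le_tsum (u.image g) (fun n _ ↦ by positivity))
  have hn : (0 : ℝ) ≤ n := Nat.cast_nonneg n
  have h1 : ∀ ρ ∈ u.filter (fun ρ ↦ g ρ = n), 1 / (1 + ‖(ρ : ℂ) - c‖) ^ 4 ≤
      1 / ((n : ℝ) + 1) ^ 4 := by
    intro ρ hρ
    have h2 : g ρ = n := (Finset.mem_filter.mp hρ).2
    have h3 : (n : ℝ) ≤ ‖(ρ : ℂ) - c‖ := by
      rw [← h2]; exact Nat.floor_le (norm_nonneg _)
    refine one_div_le_one_div_of_le (by positivity) ?_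
    exact pow_le_pow_left₀ (by positivity) (by linarith) 4
  refine (Finset.sum_le_card_nsmul _ _ _ h1).trans ?_
  have h2 : ((u.filter (fun ρ ↦ g ρ = n)).card : ℝ) ≤ D * (1 + ((n : ℝ) + 1)) ^ 2 := by
    have h3 := hcard (n + 1) (by linarith)
      ((u.filter (fun ρ ↦ g ρ = n)).map (Function.Embedding.subtype _)) (by
        intro ρ hρ
        obtain ⟨σ, hσ, rfl⟩ := Finset.mem_map.mp hρ
        refine ⟨σ.2, ?_⟩
        have h2 : g σ = n := (Finset.mem_filter.mp hσ).2
        rw [← h2]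
        exact (Nat.lt_floor_add_one _).le)
    rwa [Finset.card_map] at h3
  rw [nsmul_eq_mul]
  calc _ ≤ D * (1 + ((n : ℝ) + 1)) ^ 2 * (1 / ((n : ℝ) + 1) ^ 4) := by gcongr
    _ ≤ D * (2 * ((n : ℝ) + 1)) ^ 2 * (1 / ((n : ℝ) + 1) ^ 4) := by gcongr; linarith
    _ = _ := by field_simp; norm_num

/-- The set of all zeros of zeta. -/
def zetaZeros : Set ℂ := {ρ | riemannZeta ρ = 0}

lemma zeta₁_a_ne_zero {a : ℝ} (ha : a < 0) (heven : ∀ n : ℕ, 0 < n → a ≠ -(2 * n : ℝ)) :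
    riemannZeta₁ (a : ℂ) ≠ 0 := by
  have ha1 : (a : ℂ) ≠ 1 := by
    intro h
    have : a = 1 := by exact_mod_cast h
    linarith
  exact fun h ↦ zeta_a_ne_zero ha heven ((zeta_eq_zero_iff ha1).mpr h)

/-- The number of zeros of zeta at distance at most `r` from `a` is `O(r ^ 2)`. -/
lemma card_zetaZeros_le {a : ℝ} (ha : a < 0) (heven : ∀ n : ℕ, 0 < n → a ≠ -(2 * n : ℝ)) :
    ∃ D : ℝ, 0 < D ∧ ∀ r : ℝ, 1 ≤ r → ∀ A : Finset ℂ,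
      (∀ ρ ∈ A, ρ ∈ zetaZeros ∧ ‖ρ - a‖ ≤ r) → (A.card : ℝ) ≤ D * (1 + r) ^ 2 := by
  obtain ⟨C₀, hC₀, hb⟩ := norm_zeta₁_shift_le (a := a)
  obtain ⟨D, hD, h⟩ := card_zeros_le (F := fun w ↦ riemannZeta₁ (a + w))
    (differentiable_riemannZeta₁.comp (by fun_prop))
    (by simpa using zeta₁_a_ne_zero ha heven) hC₀ hb
  refine ⟨D, hD, fun r hr A hA ↦ ?_⟩
  have h1 := h r hr (A.map (addRightEmbedding (-(a : ℂ)))) (by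
    intro w hw
    obtain ⟨ρ, hρ, rfl⟩ := Finset.mem_map.mp hw
    obtain ⟨h1, h2⟩ := hA ρ hρ
    have h1' : riemannZeta ρ = 0 := h1
    rw [addRightEmbedding_apply]
    refine ⟨?_, by rwa [← sub_eq_add_neg]⟩
    have e : (a : ℂ) + (ρ + -a) = ρ := by ring
    simp only [e]
    exact (zeta_eq_zero_iff (zeta_zero_ne_one h1')).mp h1')
  rwa [Finset.card_map] at h1

lemma finite_zetaZeros {a : ℝ} (ha : a < 0) (heven : ∀ n : ℕ, 0 < n → a ≠ -(2 * n : ℝ)) (r : ℝ) :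
    {ρ : ℂ | ρ ∈ zetaZeros ∧ ‖ρ - a‖ ≤ r}.Finite := by
  obtain ⟨C₀, hC₀, hb⟩ := norm_zeta₁_shift_le (a := a)
  have h := finite_zeros (F := fun w ↦ riemannZeta₁ (a + w))
    (differentiable_riemannZeta₁.comp (by fun_prop))
    (by simpa using zeta₁_a_ne_zero ha heven) hC₀ hb r
  refine (h.image (fun w : ℂ ↦ (a : ℂ) + w)).subset (fun ρ hρ ↦ ⟨ρ - a, ⟨?_, hρ.2⟩, by simp⟩)
  have h1' : riemannZeta ρ = 0 := hρ.1
  have e : (a : ℂ) + (ρ - a) = ρ := by ring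
  simp only [e]
  have hne := zeta_zero_ne_one h1'
  exact (zeta_eq_zero_iff hne).mp hρ.1

/-- All zeros of zeta have real part less than one, so that far out they lie in the region where the
denominator grows exponentially in `‖z‖`, whereas the zeros have polynomial counting function. -/
lemma summable_zeros {a : ℝ} (ha : a < 0) (heven : ∀ n : ℕ, 0 < n → a ≠ -(2 * n : ℝ)) :
    Summable (fun ρ : zetaZeros ↦ (ρ : ℂ) / sinhDen a ρ) := by
  obtain ⟨D, hD, hcard⟩ := card_zetaZeros_le ha heven
  have hs := summable_inv_pow_of_card_le hD hcard
  refine hs.of_norm_bounded_eventually ?_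
  obtain ⟨b, rfl⟩ : ∃ b : ℝ, a = -b := ⟨-a, by ring⟩
  have hb0 : 0 < b := by linarith
  obtain ⟨R₁, hR₁⟩ := eventually_atTop.mp
    (eventually_pow_le_sinh (2 * (1 + 4 * b) ^ 4) 10)
  set R₀ := max (max R₁ 1) ((b + 2) / b) with hR₀
  have hfin := finite_zetaZeros ha heven (4 * b * R₀ ^ 2)
  have hfin2 : {ρ : zetaZeros | ‖(ρ : ℂ) - ((-b : ℝ) : ℂ)‖ ≤ 4 * b * R₀ ^ 2}.Finite := by
    refine Set.Finite.of_finite_image (f := Subtype.val) (hfin.subset ?_)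
      Subtype.val_injective.injOn
    rintro _ ⟨ρ, hρ, rfl⟩
    exact ⟨ρ.2, hρ⟩
  filter_upwards [hfin2.compl_mem_cofinite] with ρ hρ
  have hρ' : 4 * b * R₀ ^ 2 < ‖(ρ : ℂ) - ((-b : ℝ) : ℂ)‖ := by simpa using hρ
  obtain ⟨w, hw⟩ := ρ
  simp only at hρ' ⊢
  have hζ : riemannZeta w = 0 := hw
  have hre1 : w.re < 1 := by
    by_contra hcon
    exact riemannZeta_ne_zero_of_one_le_re (by linarith) hζ
  obtain ⟨z, -, hzn, hzre, hzsq, hzS⟩ := exists_param ha w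
  rw [neg_neg] at hzn hzS hzre
  obtain ⟨R, hR⟩ : ∃ R, ‖z‖ = R := ⟨_, rfl⟩
  have hR0 : 0 ≤ R := hR ▸ norm_nonneg z
  rw [hR] at hzn hzS hzsq
  have hRR : R₀ ≤ R := by
    refine le_of_abs_le (abs_le_of_sq_le_sq ?_ hR0)
    rw [hzn] at hρ'
    exact (lt_of_mul_lt_mul_left hρ' (by positivity)).le
  have hR1 : 1 ≤ R := ((le_max_right _ _).trans (le_max_left _ _)).trans hRR
  have hRR₁ : R₁ ≤ R := ((le_max_left _ _).trans (le_max_left _ _)).trans hRR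
  have hbR : b + 2 ≤ b * R := by
    have := (le_max_right _ _).trans hRR
    rw [div_le_iff₀ hb0] at this
    linarith
  have hRsq : R ≤ R ^ 2 := by nlinarith only [hR1]
  have him : R ^ 2 / 4 ≤ z.im ^ 2 := by
    have h1 : b * (z.re ^ 2 - z.im ^ 2) ≤ b * (R ^ 2 / 2) := by
      have := mul_le_mul_of_nonneg_left hRsq hb0.le
      linarith
    have := le_of_mul_le_mul_left h1 hb0
    linarith
  have hsin := sinh_le_norm_sin (z := z) (by rw [hR]; exact him)
  rw [hR] at hsin
  have hsinh := hR₁ R hRR₁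
  have hS : 2 * b * Real.sinh R ≤ ‖sinhDen (-b) w‖ := by
    rw [hzS]
    have h0 : 0 ≤ Real.sinh R := Real.sinh_nonneg_iff.mpr hR0
    have : Real.sinh R ≤ R * ‖sin (π * z)‖ := by
      nlinarith only [hsin, hR1, h0]
    gcongr
  have hwn : ‖w‖ ≤ 4 * b * (1 + R) ^ 2 := by
    have h1 := norm_le_norm_sub_add w ((-b : ℝ) : ℂ)
    have h2 : ‖((-b : ℝ) : ℂ)‖ = b := by
      rw [norm_real, Real.norm_eq_abs, abs_neg, abs_of_pos hb0]
    rw [hzn, h2] at h1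
    nlinarith only [h1, hb0, mul_nonneg hb0.le hR0]
  have hd : 1 + ‖w - ((-b : ℝ) : ℂ)‖ ≤ (1 + 4 * b) * (1 + R) ^ 2 := by
    rw [hzn]
    nlinarith only [hb0, mul_nonneg hb0.le hR0, hR0]
  have hSpos : 0 < ‖sinhDen (-b) w‖ :=
    norm_pos_iff.mpr (sinhDen_zero_ne ha heven hζ)
  rw [norm_div, div_le_div_iff₀ hSpos (by positivity), one_mul]
  calc ‖w‖ * (1 + ‖w - ((-b : ℝ) : ℂ)‖) ^ 4
      ≤ (4 * b * (1 + R) ^ 2) * ((1 + 4 * b) * (1 + R) ^ 2) ^ 4 := by gcongr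
    _ = 2 * b * (2 * (1 + 4 * b) ^ 4 * (1 + R) ^ 10) := by ring
    _ ≤ 2 * b * Real.sinh R := by gcongr
    _ ≤ _ := hS

lemma summable_poles {a : ℝ} (ha : a < 0) :
    Summable (fun k : ℕ ↦ (-1 : ℂ) ^ k * ((2 * (k : ℂ) + 1) * (2 * (k : ℂ) + 3)) *
        deriv riemannZeta (-(a : ℂ) * (2 * (k : ℂ) + 1) * (2 * (k : ℂ) + 3)) /
        riemannZeta (-(a : ℂ) * (2 * (k : ℂ) + 1) * (2 * (k : ℂ) + 3))) := by
  have hs : Summable (fun n : ℕ ↦ 1 / ((n : ℝ) + 1) ^ 2) := by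
    have := (summable_nat_add_iff 1).mpr (Real.summable_one_div_nat_pow.mpr (by norm_num : 1 < 2))
    simpa using this
  obtain ⟨b, rfl⟩ : ∃ b : ℝ, a = -b := ⟨-a, by ring⟩
  have hb0 : 0 < b := by linarith
  obtain ⟨C, hC, hlog⟩ := norm_logDeriv_zeta_le
  refine hs.of_norm_bounded_eventually_nat ?_
  filter_upwards [tendsto_natCast_atTop_atTop.eventually
    (eventually_pow_le_two_rpow (8 * C) 4 (c := b) hb0),
    tendsto_natCast_atTop_atTop.eventually (eventually_ge_atTop (2 / b)),
    eventually_ge_atTop 1] with k hk1 hk2 hk3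
  have hk3' : (1 : ℝ) ≤ k := by exact_mod_cast hk3
  rw [div_le_iff₀ hb0] at hk2
  set K : ℝ := (2 * (k : ℝ) + 1) * (2 * (k : ℝ) + 3) with hK
  have hK1 : (k : ℝ) ^ 2 ≤ K := by rw [hK]; nlinarith only [hk3']
  have hK2 : K ≤ 8 * (1 + (k : ℝ)) ^ 2 := by rw [hK]; nlinarith only [hk3']
  have hK0 : 0 < K := by positivity
  have e : -((-b : ℝ) : ℂ) * (2 * (k : ℂ) + 1) * (2 * (k : ℂ) + 3) = ((b * K : ℝ) : ℂ) := by
    rw [hK]; push_cast; ring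
  have e2 : (2 * (k : ℂ) + 1) * (2 * (k : ℂ) + 3) = ((K : ℝ) : ℂ) := by
    rw [hK]; push_cast; ring
  rw [e, e2, mul_div_assoc, norm_mul, norm_mul, norm_pow, norm_neg, norm_one, one_pow, one_mul,
    norm_real, Real.norm_of_nonneg hK0.le, le_div_iff₀ (by positivity)]
  have h1 := hlog ((b * K : ℝ) : ℂ) (by
    rw [ofReal_re]; nlinarith only [hk2, hK1, hk3', hb0])
  rw [ofReal_re, Real.rpow_neg (by norm_num)] at h1
  have h2 : (2 : ℝ) ^ (b * (k : ℝ) ^ 2) ≤ (2 : ℝ) ^ (b * K) :=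
    Real.rpow_le_rpow_of_exponent_le (by norm_num) (by gcongr)
  have hpos : (0 : ℝ) < (2 : ℝ) ^ (b * K) := by positivity
  calc _ ≤ (8 * (1 + (k : ℝ)) ^ 2) * (C * ((2 : ℝ) ^ (b * K))⁻¹) * ((k : ℝ) + 1) ^ 2 := by gcongr
    _ = (8 * C * (1 + (k : ℝ)) ^ 4) / (2 : ℝ) ^ (b * K) := by ring
    _ ≤ 1 := div_le_one_of_le₀ (hk1.trans h2) hpos.le

/-! ### Vanishing of the sum of residues -/

/-- The residue of `integrand a` at the zero `a - 4 a m ^ 2` of the denominator. -/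
noncomputable def poleResidue (a : ℝ) (m : ℕ) : ℂ :=
  (a - 4 * a * (m : ℂ) ^ 2) * (deriv riemannZeta (a - 4 * a * (m : ℂ) ^ 2) /
    riemannZeta (a - 4 * a * (m : ℂ) ^ 2)) / poleDeriv m

/-- The residue theorem on a circle that avoids all poles. -/
lemma integral_eq_sum_residues {a : ℝ} (ha : a < 0)
    (hK : ∀ k : ℕ, a * (2 * k + 1) * (2 * k + 3) ≠ -1)
    (heven : ∀ n : ℕ, 0 < n → a ≠ -(2 * n : ℝ))
    (hsimple : ∀ τ : ℂ, riemannZeta τ = 0 → 0 < τ.re → τ.re < 1 → deriv riemannZeta τ ≠ 0)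
    {j : ℕ} {r : ℝ} (h1 : 4 * (-a) * ((j : ℝ) + 1 / 3) ^ 2 ≤ r)
    (h2 : r ≤ 4 * (-a) * ((j : ℝ) + 2 / 3) ^ 2) (h3 : 2 - a ≤ r)
    (hz : ∀ w : ℂ, ‖w - a‖ = r → riemannZeta w ≠ 0) :
    (∮ w in C((a : ℂ), r), integrand a w) = 2 * π * I *
      (∑ ρ ∈ (finite_zetaZeros ha heven r).toFinset, ρ / sinhDen a ρ +
        ∑ m ∈ Finset.range (j + 1), poleResidue a m + -1 / sinhDen a 1) := by
  classical
  have hna : 0 < -a := by linarith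
  set Z := (finite_zetaZeros ha heven r).toFinset with hZ
  have hZmem : ∀ ρ, ρ ∈ Z ↔ riemannZeta ρ = 0 ∧ ‖ρ - a‖ ≤ r := fun ρ ↦ by
    simp [hZ, zetaZeros]
  set p : ℕ → ℂ := fun m ↦ a - 4 * a * (m : ℂ) ^ 2 with hp
  have hpnorm : ∀ m, ‖p m - a‖ = 4 * (-a) * (m : ℝ) ^ 2 := norm_pole_sub ha
  have hpinj : Function.Injective p := by
    intro m n hmn
    have h4 : ‖p m - a‖ = ‖p n - a‖ := by rw [hmn]
    rw [hpnorm, hpnorm] at h4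
    have h5 := mul_left_cancel₀ (by positivity) h4
    exact_mod_cast (sq_eq_sq₀ (Nat.cast_nonneg m) (Nat.cast_nonneg n)).mp h5
  set W := (Finset.range (j + 1)).image p with hW
  have hWz : ∀ w ∈ W, riemannZeta w ≠ 0 := by
    intro w hw
    obtain ⟨m, -, rfl⟩ := Finset.mem_image.mp hw
    exact zeta_pole_ne_zero ha heven m
  have hW1 : ∀ w ∈ W, w ≠ 1 := by
    intro w hw
    obtain ⟨m, -, rfl⟩ := Finset.mem_image.mp hw
    exact pole_ne_one ha hK m
  have hZW : Disjoint Z W := Finset.disjoint_left.mpr fun w hwZ hwW ↦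
    hWz w hwW ((hZmem w).mp hwZ).1
  have hZW1 : Disjoint (Z ∪ W) {1} := by
    rw [Finset.disjoint_singleton_right, Finset.mem_union]
    rintro (h | h)
    · exact zeta_zero_ne_one ((hZmem 1).mp h).1 rfl
    · exact hW1 1 h rfl
  set res : ℂ → ℂ := fun w ↦ if w = 1 then -1 / sinhDen a 1 else if riemannZeta w = 0 then
    w / sinhDen a w else w * (deriv riemannZeta w / riemannZeta w) / deriv (sinhDen a) w with hres
  have hresZ : ∀ ρ ∈ Z, res ρ = ρ / sinhDen a ρ := fun ρ hρ ↦ by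
    have h0 := ((hZmem ρ).mp hρ).1
    simp only [hres, if_neg (zeta_zero_ne_one h0), if_pos h0]
  have hresp : ∀ m, res (p m) = poleResidue a m := fun m ↦ by
    have h4 : p m ≠ 1 := pole_ne_one ha hK m
    have h5 : riemannZeta (p m) ≠ 0 := zeta_pole_ne_zero ha heven m
    simp only [hres, if_neg h4, if_neg h5]
    rw [(hasDerivAt_sinhDen_pole ha.ne m).deriv, poleResidue]
  have hres1 : res 1 = -1 / sinhDen a 1 := by simp [hres]
  have hr0 : 0 < r := by linarith
  have key := circleIntegral_eq_sum (f := integrand a) (c := (a : ℂ)) hr0 (Z ∪ W ∪ {1}) res ?_ ?_ ?_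
  · rw [key, Finset.sum_union hZW1, Finset.sum_union hZW, Finset.sum_singleton, hres1,
      Finset.sum_congr rfl hresZ, hW, Finset.sum_image (fun _ _ _ _ h ↦ hpinj h)]
    simp only [hresp]
  · intro w hw
    rw [Metric.mem_ball, dist_eq_norm]
    simp only [Finset.mem_union, Finset.mem_singleton] at hw
    rcases hw with (hw | hw) | rfl
    · obtain ⟨h4, h5⟩ := (hZmem w).mp hw
      exact lt_of_le_of_ne h5 (fun h ↦ hz w h h4)
    · obtain ⟨m, hm, rfl⟩ := Finset.mem_image.mp hw
      have hm' : (m : ℝ) ≤ j := by exact_mod_cast Nat.lt_succ_iff.mp (Finset.mem_range.mp hm)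
      rw [hpnorm]
      refine lt_of_lt_of_le ?_ h1
      gcongr
      linarith
    · have : (1 : ℂ) - a = ((1 - a : ℝ) : ℂ) := by push_cast; ring
      rw [this, norm_real, Real.norm_of_nonneg (by linarith)]
      linarith
  · intro w hw hwP
    simp only [Finset.mem_union, Finset.mem_singleton, not_or] at hwP
    obtain ⟨⟨hwZ, hwW⟩, hw1⟩ := hwP
    rw [Metric.mem_closedBall, dist_eq_norm] at hw
    refine differentiableAt_integrand ha.ne hw1 (fun h ↦ hwZ ((hZmem w).mpr ⟨h, hw⟩)) (fun h ↦ ?_)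
    obtain ⟨m, rfl⟩ := sinhDen_eq_zero ha.ne h
    refine hwW (Finset.mem_image.mpr ⟨m, ?_, rfl⟩)
    rw [norm_pole_sub ha] at hw
    have h4 := le_of_mul_le_mul_left (hw.trans h2) (by positivity)
    have h5 : (m : ℝ) ≤ (j : ℝ) + 2 / 3 := le_of_abs_le (abs_le_of_sq_le_sq h4 (by positivity))
    have h6 : (m : ℝ) < ((j + 1 : ℕ) : ℝ) := by push_cast; linarith
    exact Finset.mem_range.mpr (by exact_mod_cast h6)
  · intro w hw
    simp only [Finset.mem_union, Finset.mem_singleton] at hw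
    rcases hw with (hw | hw) | rfl
    · have h4 := ((hZmem w).mp hw).1
      rw [hresZ w hw]
      exact residue_zero ha.ne (zeta_zero_ne_one h4) h4 (deriv_ne_zero_of_zero hsimple h4)
        (sinhDen_zero_ne ha heven h4)
    · obtain ⟨m, hm, rfl⟩ := Finset.mem_image.mp hw
      rw [hresp]
      exact residue_sinhDen (pole_ne_one ha hK m) (zeta_pole_ne_zero ha heven m)
        (sinhDen_pole ha.ne m) (hasDerivAt_sinhDen_pole ha.ne m) (poleDeriv_ne_zero m)
    · rw [hres1]
      exact residue_one ha.ne (sinhDen_one_ne ha hK)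

lemma poleResidue_zero (a : ℝ) : poleResidue a 0 =
    2 * a / π * (deriv riemannZeta (a : ℂ) / riemannZeta (a : ℂ)) := by
  have hpi : (π : ℂ) ≠ 0 := by exact_mod_cast Real.pi_ne_zero
  simp only [poleResidue, poleDeriv, if_true, Nat.cast_zero]
  have e : (a : ℂ) - 4 * a * 0 ^ 2 = a := by ring
  rw [e]
  field_simp

lemma poleResidue_succ (a : ℝ) (k : ℕ) : poleResidue a (k + 1) =
    4 * a / π * ((-1 : ℂ) ^ k * ((2 * (k : ℂ) + 1) * (2 * (k : ℂ) + 3)) *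
        deriv riemannZeta (-(a : ℂ) * (2 * (k : ℂ) + 1) * (2 * (k : ℂ) + 3)) /
        riemannZeta (-(a : ℂ) * (2 * (k : ℂ) + 1) * (2 * (k : ℂ) + 3))) := by
  have hpi : (π : ℂ) ≠ 0 := by exact_mod_cast Real.pi_ne_zero
  simp only [poleResidue, poleDeriv, Nat.succ_ne_zero, if_false]
  have e : (a : ℂ) - 4 * a * ((k + 1 : ℕ) : ℂ) ^ 2 =
      -(a : ℂ) * (2 * (k : ℂ) + 1) * (2 * (k : ℂ) + 3) := by push_cast; ring
  rw [e]
  have h1 : ((-1 : ℂ) ^ (k + 1))⁻¹ = (-1) ^ (k + 1) := by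
    rw [← inv_pow]; norm_num
  have h2 : ∀ x : ℂ, x / (π * (-1) ^ (k + 1) / 4) = 4 / π * x * (-1) ^ (k + 1) := by
    intro x
    rw [div_div_eq_mul_div, div_eq_mul_inv, mul_inv, h1]
    field_simp
  rw [h2, pow_succ]
  ring

/-- The sum of all residues vanishes, since the integrals over the circles of `exists_circle` tend to
zero. -/
lemma residues_sum_zero {a : ℝ} (ha : a < 0)
    (hK : ∀ k : ℕ, a * (2 * k + 1) * (2 * k + 3) ≠ -1)
    (heven : ∀ n : ℕ, 0 < n → a ≠ -(2 * n : ℝ))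
    (hsimple : ∀ τ : ℂ, riemannZeta τ = 0 → 0 < τ.re → τ.re < 1 → deriv riemannZeta τ ≠ 0) :
    (∑' ρ : zetaZeros, (ρ : ℂ) / sinhDen a ρ) +
      ((∑' k : ℕ, poleResidue a (k + 1)) + poleResidue a 0) + -1 / sinhDen a 1 = 0 := by
  classical
  obtain ⟨J, hJ1, hJ⟩ := exists_circle ha heven hsimple
  choose! r hr1 hr2 hr3 hr4 using hJ
  have hna : 0 < -a := by linarith
  have hrtop : Tendsto r atTop atTop := by
    have h1 : Tendsto (fun j : ℕ ↦ -a * (j : ℝ)) atTop atTop :=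
      tendsto_natCast_atTop_atTop.const_mul_atTop hna
    refine tendsto_atTop_mono' _ ?_ h1
    filter_upwards [eventually_ge_atTop J] with j hj
    refine le_trans ?_ (hr1 j hj)
    have hj0 : (0 : ℝ) ≤ j := Nat.cast_nonneg j
    have h2 : (j : ℝ) ≤ 4 * ((j : ℝ) + 1 / 3) ^ 2 := by nlinarith only [hj0]
    have := mul_le_mul_of_nonneg_left h2 hna.le
    linarith
  have hsumZ : Tendsto (fun j ↦ ∑ ρ ∈ (finite_zetaZeros ha heven (r j)).toFinset, ρ / sinhDen a ρ)
      atTop (𝓝 (∑' ρ : zetaZeros, (ρ : ℂ) / sinhDen a ρ)) := by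
    have h1 := (summable_zeros ha heven).hasSum
    set T : ℝ → Finset zetaZeros := fun r ↦
      (finite_zetaZeros ha heven r).toFinset.subtype (· ∈ zetaZeros) with hT
    have hTm : ∀ (r : ℝ) (ρ : zetaZeros), ρ ∈ T r ↔ ‖(ρ : ℂ) - a‖ ≤ r := by
      intro r ρ
      simp [hT]
    have hTtop : Tendsto T atTop atTop := by
      refine tendsto_atTop_finset_of_monotone (fun r s hrs ρ hρ ↦ ?_) (fun ρ ↦ ?_)
      · exact (hTm s ρ).mpr (((hTm r ρ).mp hρ).trans hrs)
      · exact ⟨_, (hTm _ ρ).mpr le_rfl⟩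
    refine ((h1.comp hTtop).comp hrtop).congr (fun j ↦ ?_)
    simp only [Function.comp_apply, hT]
    exact Finset.sum_subtype_of_mem (fun ρ : ℂ ↦ ρ / sinhDen a ρ) (fun ρ hρ ↦ by
      have := (Set.Finite.mem_toFinset _).mp hρ
      exact this.1)
  have hsumP : Tendsto (fun j ↦ ∑ m ∈ Finset.range (j + 1), poleResidue a m) atTop
      (𝓝 ((∑' k : ℕ, poleResidue a (k + 1)) + poleResidue a 0)) := by
    have h1 : Summable (fun k ↦ poleResidue a (k + 1)) := by
      simp only [poleResidue_succ]
      exact (summable_poles ha).mul_left _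
    have h2 := h1.hasSum.tendsto_sum_nat.add_const (poleResidue a 0)
    exact h2.congr (fun j ↦ (Finset.sum_range_succ' _ _).symm)
  have hlim := (hsumZ.add hsumP).add_const (-1 / sinhDen a 1)
  refine tendsto_nhds_unique hlim ?_
  have hpi : (2 * π * I : ℂ) ≠ 0 := two_pi_I_ne_zero
  have hcircle : Tendsto (fun j ↦ ∮ w in C((a : ℂ), r j), integrand a w) atTop (𝓝 0) := by
    refine squeeze_zero_norm' (a := fun j : ℕ ↦ 2 * π * (1 / (j : ℝ))) ?_ ?_
    · filter_upwards [eventually_ge_atTop J] with j hj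
      have hr0 : 0 < r j := by linarith [hr3 j hj]
      have := circleIntegral.norm_integral_le_of_norm_le_const (c := (a : ℂ)) (f := integrand a)
        hr0.le (fun w hw ↦ (hr4 j hj w (by rwa [mem_sphere_iff_norm] at hw)).2.2)
      refine this.trans (le_of_eq ?_)
      field_simp
    · have := tendsto_one_div_atTop_nhds_zero_nat (𝕜 := ℝ)
      simpa using this.const_mul (2 * π)
  have h5 := hcircle.const_mul (2 * π * I : ℂ)⁻¹
  rw [mul_zero] at h5
  refine h5.congr' ?_
  filter_upwards [eventually_ge_atTop J] with j hj
  rw [integral_eq_sum_residues ha hK heven hsimple (hr1 j hj) (hr2 j hj) (hr3 j hj)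
    (fun w hw ↦ (hr4 j hj w hw).2.1), inv_mul_cancel_left₀ hpi]

/-- Splitting the zeros of zeta into trivial and nontrivial ones. -/
lemma tsum_zetaZeros {f : ℂ → ℂ} (hf : Summable (fun ρ : zetaZeros ↦ f ρ)) :
    ∑' ρ : zetaZeros, f ρ = (∑' n : ℕ, f (-2 * ((n : ℂ) + 1))) +
      ∑' τ : {τ : ℂ // riemannZeta τ = 0 ∧ 0 < τ.re ∧ τ.re < 1}, f τ := by
  set g : ℕ → ℂ := fun n ↦ -2 * ((n : ℂ) + 1) with hg
  have hinj : Function.Injective g := by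
    intro m n h
    simpa [hg] using h
  set N : Set ℂ := {τ : ℂ | riemannZeta τ = 0 ∧ 0 < τ.re ∧ τ.re < 1} with hN
  have hre : ∀ n, (g n).re = -2 * ((n : ℝ) + 1) := fun n ↦ by simp [hg]
  have hunion : zetaZeros = Set.range g ∪ N := by
    ext ρ
    constructor
    · intro h
      have h' : riemannZeta ρ = 0 := h
      rcases le_or_gt ρ.re 0 with h0 | h0
      · obtain ⟨n, rfl⟩ := riemannZeta_zero_of_re_nonpos h' h0
        exact Or.inl ⟨n, rfl⟩
      · refine Or.inr ⟨h', h0, ?_⟩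
        by_contra hcon
        exact riemannZeta_ne_zero_of_one_le_re (by linarith) h'
    · rintro (⟨n, rfl⟩ | h)
      · exact riemannZeta_neg_two_mul_nat_add_one n
      · exact h.1
  have hdisj : Disjoint (Set.range g) N := by
    rw [Set.disjoint_left]
    rintro _ ⟨n, rfl⟩ h
    have h1 := h.2.1
    rw [hre] at h1
    have : (0 : ℝ) ≤ n := Nat.cast_nonneg n
    linarith
  have hs1 : Summable (f ∘ (↑) : Set.range g → ℂ) :=
    hf.comp_injective (Set.inclusion_injective (hunion ▸ Set.subset_union_left))
  have hs2 : Summable (f ∘ (↑) : N → ℂ) :=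
    hf.comp_injective (Set.inclusion_injective (hunion ▸ Set.subset_union_right))
  rw [hunion, Summable.tsum_union_disjoint hdisj hs1 hs2, tsum_range f hinj]
  rfl

end

/-! ### The identity -/

theorem stmt_12 (a : ℝ) (ha : a < 0)
    (hK : ∀ k : ℕ, a * (2 * k + 1) * (2 * k + 3) ≠ -1)
    (heven : ∀ n : ℕ, 0 < n → a ≠ -(2 * n : ℝ))
    (hapq : ∀ p q : ℕ, 0 < p → 0 < q → a ≠ -(2 * p) / (4 * q ^ 2 - 1))
    (hsimple : ∀ τ : ℂ, riemannZeta τ = 0 → 0 < τ.re → τ.re < 1 →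
      deriv riemannZeta τ ≠ 0) :
    (∑' k : ℕ, (-1 : ℂ) ^ k * ((2 * (k : ℂ) + 1) * (2 * (k : ℂ) + 3)) *
        deriv riemannZeta (-(a : ℂ) * (2 * (k : ℂ) + 1) * (2 * (k : ℂ) + 3)) /
        riemannZeta (-(a : ℂ) * (2 * (k : ℂ) + 1) * (2 * (k : ℂ) + 3)))
      - ((π : ℂ) / (2 * (a : ℂ))) * (∑' n : ℕ,
          ((n : ℂ) + 1) /
            (((-(a : ℂ) ^ 2 - 2 * (a : ℂ) * ((n : ℂ) + 1)) ^ ((1 : ℂ) / 2)) *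
              Complex.sinh ((π : ℂ) *
                ((-(a : ℂ) ^ 2 - 2 * (a : ℂ) * ((n : ℂ) + 1)) ^ ((1 : ℂ) / 2)) /
                (2 * (a : ℂ)))))
    = -deriv riemannZeta (a : ℂ) / (2 * riemannZeta (a : ℂ))
      + (π : ℂ) / (4 * (a : ℂ) * (((a : ℂ) - (a : ℂ) ^ 2) ^ ((1 : ℂ) / 2)) *
          Complex.sinh ((π : ℂ) * (((a : ℂ) - (a : ℂ) ^ 2) ^ ((1 : ℂ) / 2)) / (2 * (a : ℂ))))
      - ((π : ℂ) / (4 * (a : ℂ))) *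
        ∑' τ : {τ : ℂ // riemannZeta τ = 0 ∧ 0 < τ.re ∧ τ.re < 1},
          (τ : ℂ) / ((((a : ℂ) * (τ : ℂ) - (a : ℂ) ^ 2) ^ ((1 : ℂ) / 2)) *
            Complex.sinh ((π : ℂ) *
              (((a : ℂ) * (τ : ℂ) - (a : ℂ) ^ 2) ^ ((1 : ℂ) / 2)) / (2 * (a : ℂ)))) := by
  have ha0 : (a : ℂ) ≠ 0 := by exact_mod_cast ha.ne
  have hpi : (π : ℂ) ≠ 0 := by exact_mod_cast Real.pi_ne_zero
  have hza := zeta_a_ne_zero ha heven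
  have hS := sinhDen_one_ne ha hK
  have key := residues_sum_zero ha hK heven hsimple
  rw [tsum_zetaZeros (f := fun w ↦ w / sinhDen a w) (summable_zeros ha heven),
    poleResidue_zero] at key
  simp only [poleResidue_succ] at key
  rw [tsum_mul_left] at key
  have htriv : ∀ n : ℕ, -2 * ((n : ℂ) + 1) / sinhDen a (-2 * ((n : ℂ) + 1)) =
      -2 * (((n : ℂ) + 1) /
        (((-(a : ℂ) ^ 2 - 2 * (a : ℂ) * ((n : ℂ) + 1)) ^ ((1 : ℂ) / 2)) *
          Complex.sinh ((π : ℂ) *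
            ((-(a : ℂ) ^ 2 - 2 * (a : ℂ) * ((n : ℂ) + 1)) ^ ((1 : ℂ) / 2)) /
            (2 * (a : ℂ))))) := by
    intro n
    have h : (a : ℂ) * (-2 * ((n : ℂ) + 1)) - (a : ℂ) ^ 2 =
        -(a : ℂ) ^ 2 - 2 * (a : ℂ) * ((n : ℂ) + 1) := by ring
    rw [sinhDen, h, mul_div_assoc]
  rw [tsum_congr htriv, tsum_mul_left] at key
  have hone : ((a : ℂ) - (a : ℂ) ^ 2) ^ ((1 : ℂ) / 2) *
      Complex.sinh ((π : ℂ) * (((a : ℂ) - (a : ℂ) ^ 2) ^ ((1 : ℂ) / 2)) / (2 * (a : ℂ))) =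
      sinhDen a 1 := by
    rw [sinhDen, mul_one]
  rw [mul_assoc (4 * (a : ℂ)) (((a : ℂ) - (a : ℂ) ^ 2) ^ ((1 : ℂ) / 2)), hone]
  change _ = _ - (π : ℂ) / (4 * (a : ℂ)) *
    ∑' τ : {τ : ℂ // riemannZeta τ = 0 ∧ 0 < τ.re ∧ τ.re < 1}, (τ : ℂ) / sinhDen a τ
  generalize (∑' τ : {τ : ℂ // riemannZeta τ = 0 ∧ 0 < τ.re ∧ τ.re < 1},
    (τ : ℂ) / sinhDen a τ) = T at key ⊢
  generalize (∑' n : ℕ, ((n : ℂ) + 1) / _) = N at key ⊢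
  generalize (∑' k : ℕ, (-1 : ℂ) ^ k * _ * _ / _) = P at key ⊢
  generalize sinhDen a 1 = s at *
  generalize deriv riemannZeta (a : ℂ) = d at *
  generalize riemannZeta (a : ℂ) = z at *
  field_simp at key ⊢
  linear_combination 2 * key
end

section
/- Let a ∈ ℂ with Re a > 0 and suppose there is δ > 0 such that ζ(4·a·v·(v+i)) ≠ 0 for every v ∈ ℂ with |Im v| ≤ δ. Then ∫_{−∞}^{∞} sinh(π·v) / ( ζ(4·a·(v² + i·v)) · cosh(π·v)² ) dv = (4·i·a/π) · ∫_{−∞}^{∞} (2·i·v − 1) · ζ'(4·a·(v² + i·v)) / ( cosh(π·v) · ζ(4·a·(v² + i·v))² ) dv. -/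
open Complex MeasureTheory
open scoped Real

/-!
The identity is an integration by parts. With `s v = 4a(v² + iv)`, the function
`F v = 1 / (ζ (s v) cosh (π v))` has derivative
`-π sinh (π v) / (ζ (s v) cosh² (π v)) - s' v ζ' (s v) / (ζ (s v)² cosh (π v))`,
and `∫ F' = 0`, which is the claim because `s' v = -4ia(2iv - 1)`.

Two points need care. First, `s v` may hit the pole `1` of `ζ` at one real `v`, where Mathlib's `ζ`
takes an arbitrary (nonzero) value. Hence `1/ζ` is replaced by `zetaInv`, its holomorphic extension
across `1` (`analyticAt_zetaInv`); since `s` is injective on `ℝ`, the integrands change at no more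
than one point (`ae_ne_one`). Second, integrability: `Re (s v) → ∞` as `|v| → ∞`
(`eventually_re`), and `1/ζ` and `ζ'/ζ²` are bounded on a right half plane
(`norm_zeta_sub_one_le`, `norm_deriv_zeta_le`), so everything decays like `(1 + |v|) / cosh (π v)`.
-/

/-- The holomorphic extension of `1/ζ` across the pole of `ζ` at `1`, where it vanishes. -/
noncomputable def zetaInv (s : ℂ) : ℂ := Function.update (fun s => (riemannZeta s)⁻¹) 1 0 s

lemma zetaInv_of_ne {s : ℂ} (hs : s ≠ 1) : zetaInv s = (riemannZeta s)⁻¹ := by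
  simp [zetaInv, hs]

lemma zetaInv_eventuallyEq {s : ℂ} (hs : s ≠ 1) :
    zetaInv =ᶠ[nhds s] fun z => (riemannZeta z)⁻¹ := by
  filter_upwards [isOpen_ne.mem_nhds hs] with z hz using zetaInv_of_ne hz

lemma hasDerivAt_zetaInv_of_ne {s : ℂ} (hs : s ≠ 1) (h0 : riemannZeta s ≠ 0) :
    HasDerivAt zetaInv (-deriv riemannZeta s / riemannZeta s ^ 2) s :=
  ((differentiableAt_riemannZeta hs).hasDerivAt.inv h0).congr_of_eventuallyEq
    (zetaInv_eventuallyEq hs)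

/-- Near `1` this is the removable singularity theorem, as `(s - 1) ζ s → 1`. -/
lemma analyticAt_zetaInv {s : ℂ} (h0 : riemannZeta s ≠ 0) : AnalyticAt ℂ zetaInv s := by
  have hres := riemannZeta_residue_one
  have hev : ∀ᶠ z in nhdsWithin s {s}ᶜ, z ≠ 1 ∧ riemannZeta z ≠ 0 := by
    by_cases hs : s = 1
    · subst hs
      filter_upwards [hres.eventually_ne one_ne_zero, self_mem_nhdsWithin] with z hz hz1
      exact ⟨hz1, right_ne_zero_of_mul hz⟩
    · refine Filter.Eventually.filter_mono nhdsWithin_le_nhds ?_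
      exact (isOpen_ne.eventually_mem hs).and
        ((differentiableAt_riemannZeta hs).continuousAt.eventually_ne h0)
  refine Complex.analyticAt_of_differentiable_on_punctured_nhds_of_continuousAt ?_ ?_
  · filter_upwards [hev] with z hz
    exact (hasDerivAt_zetaInv_of_ne hz.1 hz.2).differentiableAt
  · by_cases hs : s = 1
    · subst hs
      have h1 : Filter.Tendsto (fun z : ℂ => (z - 1) * ((z - 1) * riemannZeta z)⁻¹)
          (nhdsWithin 1 {1}ᶜ) (nhds ((1 - 1) * 1⁻¹)) := by
        refine Filter.Tendsto.mul ?_ (hres.inv₀ one_ne_zero)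
        exact ((continuous_id.sub continuous_const).tendsto (1 : ℂ)).mono_left nhdsWithin_le_nhds
      rw [sub_self, zero_mul] at h1
      unfold zetaInv
      refine continuousAt_update_same.2 (h1.congr' ?_)
      filter_upwards [self_mem_nhdsWithin] with z hz
      have : z - 1 ≠ 0 := sub_ne_zero.2 hz
      rw [mul_inv, mul_inv_cancel_left₀ this]
    · exact (hasDerivAt_zetaInv_of_ne hs h0).continuousAt

/-- Compare with `ζ 2 - 1 = π² / 6 - 1 < 2 / 3`. -/
lemma norm_zeta_sub_one_le {s : ℂ} (hs : 2 ≤ s.re) : ‖riemannZeta s - 1‖ ≤ 2 / 3 := by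
  have h2 : HasSum (fun n : ℕ => 1 / ((n + 2 : ℕ) : ℝ) ^ 2) (π ^ 2 / 6 - 1) := by
    have := (hasSum_nat_add_iff' 2).2 hasSum_zeta_two
    simpa [Finset.sum_range_succ] using this
  have hsum : Summable (fun n : ℕ => 1 / (n : ℂ) ^ s) :=
    Complex.summable_one_div_nat_cpow.2 (by linarith)
  have hs0 : s ≠ 0 := by rintro rfl; norm_num at hs
  have heq : riemannZeta s - 1 = ∑' n : ℕ, 1 / ((n + 2 : ℕ) : ℂ) ^ s := by
    rw [zeta_eq_tsum_one_div_nat_cpow (by linarith), ← hsum.sum_add_tsum_nat_add 2]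
    simp [Finset.sum_range_succ, hs0]
  rw [heq]
  refine (tsum_of_norm_bounded h2 fun n => ?_).trans ?_
  · rw [norm_div, norm_one, Complex.norm_natCast_cpow_of_pos (by omega)]
    gcongr
    rw [← Real.rpow_natCast]
    apply Real.rpow_le_rpow_of_exponent_le
    · push_cast; linarith [(Nat.cast_nonneg n : (0 : ℝ) ≤ n)]
    · exact_mod_cast hs
  · nlinarith [Real.pi_lt_d2, Real.pi_pos]

lemma norm_inv_zeta_le {s : ℂ} (hs : 2 ≤ s.re) : ‖(riemannZeta s)⁻¹‖ ≤ 3 := by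
  have h1 := norm_zeta_sub_one_le hs
  have h2 : ‖(1 : ℂ)‖ ≤ ‖riemannZeta s‖ + ‖riemannZeta s - 1‖ := by
    simpa using norm_sub_le (riemannZeta s) (riemannZeta s - 1)
  rw [norm_one] at h2
  rw [norm_inv]
  exact inv_le_of_inv_le₀ (by norm_num) (by linarith)

/-- Cauchy's estimate on the unit circle around `s`. -/
lemma norm_deriv_zeta_le {s : ℂ} (hs : 3 ≤ s.re) : ‖deriv riemannZeta s‖ ≤ 2 := by
  have hre : ∀ z ∈ Metric.closedBall s 1, 2 ≤ z.re := fun z hz => by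
    have h1 := Complex.abs_re_le_norm (z - s)
    rw [mem_closedBall_iff_norm] at hz
    rw [Complex.sub_re] at h1
    linarith [(abs_le.1 (h1.trans hz)).1]
  have := Complex.norm_deriv_le_of_forall_mem_sphere_norm_le (f := riemannZeta) (c := s)
    (R := 1) (C := 2) one_pos ?_ ?_
  · simpa using this
  · refine DifferentiableOn.diffContOnCl fun z hz => ?_
    rw [closure_ball _ one_ne_zero] at hz
    refine (differentiableAt_riemannZeta ?_).differentiableWithinAt
    rintro rfl
    have := hre _ hz
    norm_num at this
  · intro z hz
    have h1 := norm_zeta_sub_one_le (hre z (Metric.sphere_subset_closedBall hz))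
    have h2 : ‖riemannZeta z‖ ≤ ‖riemannZeta z - 1‖ + ‖(1 : ℂ)‖ := by
      simpa using norm_add_le (riemannZeta z - 1) 1
    rw [norm_one] at h2
    linarith

lemma norm_zetaInv_le {s : ℂ} (hs : 3 ≤ s.re) : ‖zetaInv s‖ ≤ 3 := by
  have h1 : s ≠ 1 := by rintro rfl; norm_num at hs
  rw [zetaInv_of_ne h1]
  exact norm_inv_zeta_le (by linarith)

lemma norm_deriv_zetaInv_le {s : ℂ} (hs : 3 ≤ s.re) : ‖deriv zetaInv s‖ ≤ 18 := by
  have h1 : s ≠ 1 := by rintro rfl; norm_num at hs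
  have h0 : riemannZeta s ≠ 0 := riemannZeta_ne_zero_of_one_le_re (by linarith)
  rw [(hasDerivAt_zetaInv_of_ne h1 h0).deriv, div_eq_mul_inv, ← inv_pow, norm_mul, norm_neg,
    norm_pow]
  calc _ ≤ (2 : ℝ) * 3 ^ 2 := by
        gcongr
        · exact norm_deriv_zeta_le hs
        · exact norm_inv_zeta_le (by linarith)
    _ = 18 := by norm_num

/-- The argument of `ζ` in both integrands. -/
noncomputable def zetaArg (a : ℂ) (v : ℝ) : ℂ := 4 * a * ((v : ℂ) ^ 2 + I * (v : ℂ))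

lemma continuous_zetaArg (a : ℂ) : Continuous (zetaArg a) := by
  unfold zetaArg; fun_prop

lemma hasDerivAt_zetaArg (a : ℂ) (v : ℝ) :
    HasDerivAt (zetaArg a) (4 * a * (2 * (v : ℂ) + I)) v := by
  have h : HasDerivAt (fun z : ℂ => 4 * a * (z ^ 2 + I * z)) (4 * a * (2 * (v : ℂ) + I)) (v : ℂ) := by
    have := (((hasDerivAt_id (v : ℂ)).pow 2).add ((hasDerivAt_id (v : ℂ)).const_mul I)).const_mul
      (4 * a)
    simpa using this
  exact h.comp_ofReal

lemma eventually_re {a : ℂ} (ha : 0 < a.re) :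
    ∀ᶠ v : ℝ in Filter.cocompact ℝ, 3 ≤ (zetaArg a v).re := by
  filter_upwards [(tendsto_norm_cocompact_atTop (E := ℝ)).eventually_ge_atTop
    ((|a.im| + 1) / a.re + 1)] with v hv
  rw [Real.norm_eq_abs] at hv
  have hq : 0 ≤ (|a.im| + 1) / a.re := by positivity
  have h1 : |a.im| + 1 ≤ |v| * a.re := by rw [← div_le_iff₀ ha]; linarith
  have h2 : (zetaArg a v).re = 4 * (a.re * v ^ 2 - a.im * v) := by
    simp [zetaArg, pow_two]; ring
  have h3 : a.im * v ≤ |a.im| * |v| := by rw [← abs_mul]; exact le_abs_self _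
  rw [h2, ← sq_abs v]
  nlinarith [mul_le_mul_of_nonneg_left h1 (abs_nonneg v)]

/-- `v² + iv` has imaginary part `v`, so it is injective on the reals. -/
lemma ae_ne_one {a : ℂ} (ha : 0 < a.re) : ∀ᵐ v : ℝ, zetaArg a v ≠ 1 := by
  have ha0 : a ≠ 0 := by rintro rfl; simp at ha
  have : Set.Subsingleton {v : ℝ | zetaArg a v = 1} := by
    intro v hv w hw
    have h : zetaArg a v = zetaArg a w := Eq.trans hv (Eq.symm hw)
    have h' := mul_left_cancel₀ (mul_ne_zero (by norm_num : (4 : ℂ) ≠ 0) ha0) h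
    have := congrArg Complex.im h'
    simpa [pow_two] using this
  have hm := this.measure_zero (volume : Measure ℝ)
  rw [ae_iff]
  simpa using hm

lemma one_add_mul_le_cosh (v : ℝ) :
    (1 + |v|) * (1 + v ^ 2) ≤ 12 * Real.exp 1 * Real.cosh (π * v) := by
  have h0 := abs_nonneg v
  have h1 : (1 + |v|) ^ 3 / 6 ≤ Real.exp (1 + |v|) := by
    have := Real.pow_div_factorial_le_exp (1 + |v|) (by positivity) 3
    simpa [Nat.factorial] using this
  have h2 : Real.exp |v| ≤ 2 * Real.cosh (π * v) := by
    have h3 : Real.exp |v| ≤ Real.exp |π * v| := by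
      rw [abs_mul, abs_of_pos Real.pi_pos]
      exact Real.exp_le_exp.2 (by nlinarith [Real.pi_gt_three])
    rw [← Real.cosh_abs, Real.cosh_eq]
    linarith [Real.exp_pos (-|π * v|)]
  rw [Real.exp_add] at h1
  have h4 := mul_le_mul_of_nonneg_left h2 (Real.exp_pos 1).le
  rw [← sq_abs v]
  nlinarith [mul_nonneg h0 h0]

lemma cosh_ne_zero' (v : ℝ) : Complex.cosh ((π : ℂ) * (v : ℂ)) ≠ 0 := by
  rw [← Complex.ofReal_mul, ← Complex.ofReal_cosh]
  exact_mod_cast (Real.cosh_pos _).ne'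

/-- A continuous `f` with `f v = O((1 + |v|) / cosh (π v))` is integrable. -/
lemma integrable_of_cosh_bound {f : ℝ → ℂ} (hf : Continuous f) (C : ℝ) (hC : 0 ≤ C)
    (h : ∀ᶠ v in Filter.cocompact ℝ, ‖f v‖ * Real.cosh (π * v) ≤ C * (1 + |v|)) :
    Integrable f := by
  refine hf.locallyIntegrable.integrable_of_isBigO_cocompact
    (g := fun v : ℝ => (1 + v ^ 2)⁻¹) ?_ (integrable_inv_one_add_sq.integrableAtFilter _)
  refine Asymptotics.IsBigO.of_bound (C * (12 * Real.exp 1)) ?_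
  filter_upwards [h] with v hv
  have hp : 0 < 1 + v ^ 2 := by positivity
  rw [Real.norm_of_nonneg (inv_nonneg.2 hp.le), ← div_eq_mul_inv, le_div_iff₀ hp]
  refine le_of_mul_le_mul_right ?_ (Real.cosh_pos (π * v))
  calc ‖f v‖ * (1 + v ^ 2) * Real.cosh (π * v)
      = (‖f v‖ * Real.cosh (π * v)) * (1 + v ^ 2) := by ring
    _ ≤ C * (1 + |v|) * (1 + v ^ 2) := by gcongr
    _ = C * ((1 + |v|) * (1 + v ^ 2)) := by ring
    _ ≤ C * (12 * Real.exp 1 * Real.cosh (π * v)) :=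
        mul_le_mul_of_nonneg_left (one_add_mul_le_cosh v) hC
    _ = _ := by ring

lemma norm_cosh_eq (v : ℝ) : ‖Complex.cosh ((π : ℂ) * (v : ℂ))‖ = Real.cosh (π * v) := by
  rw [← Complex.ofReal_mul, ← Complex.ofReal_cosh, Complex.norm_real,
    Real.norm_of_nonneg (Real.cosh_pos _).le]

lemma norm_sinh_le (v : ℝ) : ‖Complex.sinh ((π : ℂ) * (v : ℂ))‖ ≤ Real.cosh (π * v) := by
  rw [← Complex.ofReal_mul, ← Complex.ofReal_sinh, Complex.norm_real, Real.norm_eq_abs,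
    Real.abs_sinh, ← Real.cosh_abs]
  exact (Real.sinh_lt_cosh _).le

theorem stmt_13 (a : ℂ) (ha : 0 < a.re)
    (hδ : ∃ δ : ℝ, 0 < δ ∧ ∀ v : ℂ, |v.im| ≤ δ →
      riemannZeta (4 * a * v * (v + I)) ≠ 0) :
    ∫ v : ℝ, Complex.sinh ((π : ℂ) * (v : ℂ)) /
        (riemannZeta (4 * a * ((v : ℂ) ^ 2 + I * (v : ℂ))) *
          Complex.cosh ((π : ℂ) * (v : ℂ)) ^ 2)
    = (4 * I * a / (π : ℂ)) *
        ∫ v : ℝ, (2 * I * (v : ℂ) - 1) *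
          deriv riemannZeta (4 * a * ((v : ℂ) ^ 2 + I * (v : ℂ))) /
          (Complex.cosh ((π : ℂ) * (v : ℂ)) *
            riemannZeta (4 * a * ((v : ℂ) ^ 2 + I * (v : ℂ))) ^ 2) := by
  have hne : ∀ v : ℝ, riemannZeta (zetaArg a v) ≠ 0 := by
    obtain ⟨δ, hδ0, h⟩ := hδ
    intro v
    have := h v (by simpa using hδ0.le)
    rwa [show 4 * a * (v : ℂ) * (v + I) = zetaArg a v by unfold zetaArg; ring] at this
  have hcosh : Continuous fun v : ℝ => Complex.cosh ((π : ℂ) * (v : ℂ)) := by fun_prop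
  have hsinh : Continuous fun v : ℝ => Complex.sinh ((π : ℂ) * (v : ℂ)) := by fun_prop
  have hg : Continuous fun v : ℝ => zetaInv (zetaArg a v) :=
    continuous_iff_continuousAt.2 fun v =>
      ContinuousAt.comp (f := zetaArg a) (analyticAt_zetaInv (hne v)).continuousAt
        (continuous_zetaArg a).continuousAt
  have hg' : Continuous fun v : ℝ => deriv zetaInv (zetaArg a v) :=
    continuous_iff_continuousAt.2 fun v =>
      ContinuousAt.comp (f := zetaArg a) (analyticAt_zetaInv (hne v)).deriv.continuousAt
        (continuous_zetaArg a).continuousAt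
  set F : ℝ → ℂ := fun v => zetaInv (zetaArg a v) / Complex.cosh ((π : ℂ) * (v : ℂ)) with hF
  set P : ℝ → ℂ := fun v => Complex.sinh ((π : ℂ) * (v : ℂ)) * zetaInv (zetaArg a v) /
    Complex.cosh ((π : ℂ) * (v : ℂ)) ^ 2 with hP
  set Q : ℝ → ℂ := fun v => (2 * I * (v : ℂ) - 1) * deriv zetaInv (zetaArg a v) /
    Complex.cosh ((π : ℂ) * (v : ℂ)) with hQ
  have hcpos : ∀ v : ℝ, 0 < Real.cosh (π * v) := fun v => Real.cosh_pos _
  have iF : Integrable F := by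
    refine integrable_of_cosh_bound (hg.div hcosh cosh_ne_zero') 3 (by norm_num) ?_
    filter_upwards [eventually_re ha] with v hv
    simp only [hF, norm_div, norm_cosh_eq]
    rw [div_mul_cancel₀ _ (hcpos v).ne']
    linarith [norm_zetaInv_le hv, abs_nonneg v]
  have iP : Integrable P := by
    refine integrable_of_cosh_bound
      ((hsinh.mul hg).div (hcosh.pow 2) fun v => pow_ne_zero 2 (cosh_ne_zero' v)) 3 (by norm_num) ?_
    filter_upwards [eventually_re ha] with v hv
    simp only [hP, norm_div, norm_mul, norm_pow, norm_cosh_eq]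
    calc ‖Complex.sinh ((π : ℂ) * (v : ℂ))‖ * ‖zetaInv (zetaArg a v)‖ / Real.cosh (π * v) ^ 2
          * Real.cosh (π * v)
        ≤ Real.cosh (π * v) * 3 / Real.cosh (π * v) ^ 2 * Real.cosh (π * v) := by
          have := hcpos v
          gcongr
          · exact norm_sinh_le v
          · exact norm_zetaInv_le hv
      _ = 3 := by have := (hcpos v).ne'; field_simp
      _ ≤ 3 * (1 + |v|) := by linarith [abs_nonneg v]
  have iQ : Integrable Q := by
    refine integrable_of_cosh_bound
      (((by fun_prop : Continuous fun v : ℝ => 2 * I * (v : ℂ) - 1).mul hg').div hcosh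
        cosh_ne_zero') 36 (by norm_num) ?_
    filter_upwards [eventually_re ha] with v hv
    simp only [hQ, norm_div, norm_mul, norm_cosh_eq]
    rw [div_mul_cancel₀ _ (hcpos v).ne']
    have h1 : ‖2 * I * (v : ℂ) - 1‖ ≤ 2 * (1 + |v|) := by
      refine (norm_sub_le _ _).trans ?_
      simp
      linarith
    calc _ ≤ 2 * (1 + |v|) * 18 := by
          gcongr
          exact norm_deriv_zetaInv_le hv
      _ = _ := by ring
  have hderiv : ∀ v : ℝ, HasDerivAt F (-(π : ℂ) * P v + -(4 * I * a) * Q v) v := by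
    intro v
    have h1 : HasDerivAt (fun v : ℝ => zetaInv (zetaArg a v))
        (deriv zetaInv (zetaArg a v) * (4 * a * (2 * (v : ℂ) + I))) v :=
      HasDerivAt.comp v (analyticAt_zetaInv (hne v)).differentiableAt.hasDerivAt
        (hasDerivAt_zetaArg a v)
    have h2 : HasDerivAt (fun v : ℝ => Complex.cosh ((π : ℂ) * (v : ℂ)))
        (Complex.sinh ((π : ℂ) * (v : ℂ)) * π) v := by
      have h3 : HasDerivAt (fun z : ℂ => Complex.cosh ((π : ℂ) * z))
          (Complex.sinh ((π : ℂ) * (v : ℂ)) * π) (v : ℂ) := by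
        simpa using ((hasDerivAt_id (v : ℂ)).const_mul (π : ℂ)).ccosh
      exact h3.comp_ofReal
    refine (h1.div h2 (cosh_ne_zero' v)).congr_deriv ?_
    have hc := cosh_ne_zero' v
    simp only [hP, hQ]
    generalize Complex.cosh ((π : ℂ) * (v : ℂ)) = c at hc ⊢
    generalize Complex.sinh ((π : ℂ) * (v : ℂ)) = d
    field_simp
    linear_combination (8 * a * (v : ℂ) * deriv zetaInv (zetaArg a v) * c) * I_sq
  have hzero := integral_eq_zero_of_hasDerivAt_of_integrable hderiv
    ((iP.const_mul _).add (iQ.const_mul _)) iF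
  rw [integral_add (iP.const_mul _) (iQ.const_mul _), integral_const_mul, integral_const_mul]
    at hzero
  have e1 : ∫ v : ℝ, Complex.sinh ((π : ℂ) * (v : ℂ)) /
        (riemannZeta (4 * a * ((v : ℂ) ^ 2 + I * (v : ℂ))) *
          Complex.cosh ((π : ℂ) * (v : ℂ)) ^ 2) = ∫ v, P v := by
    refine integral_congr_ae ?_
    filter_upwards [ae_ne_one ha] with v hv
    simp only [hP, zetaInv_of_ne hv]
    have := hne v
    have hc := cosh_ne_zero' v
    change _ / (riemannZeta (zetaArg a v) * _) = _
    field_simp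
  have e2 : ∫ v : ℝ, (2 * I * (v : ℂ) - 1) *
          deriv riemannZeta (4 * a * ((v : ℂ) ^ 2 + I * (v : ℂ))) /
          (Complex.cosh ((π : ℂ) * (v : ℂ)) *
            riemannZeta (4 * a * ((v : ℂ) ^ 2 + I * (v : ℂ))) ^ 2) = -∫ v, Q v := by
    rw [← integral_neg]
    refine integral_congr_ae ?_
    filter_upwards [ae_ne_one ha] with v hv
    have := hne v
    have hc := cosh_ne_zero' v
    change _ * deriv riemannZeta (zetaArg a v) / (_ * riemannZeta (zetaArg a v) ^ 2) =
      -((2 * I * (v : ℂ) - 1) * deriv zetaInv (zetaArg a v) / Complex.cosh ((π : ℂ) * (v : ℂ)))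
    rw [(hasDerivAt_zetaInv_of_ne hv this).deriv]
    field_simp
  rw [e1, e2]
  have hpi : (π : ℂ) ≠ 0 := by exact_mod_cast Real.pi_ne_zero
  field_simp
  linear_combination -hzero
end
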